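/- arXiv:2511.22916 — 10 statements merged into one kernel-verified Lean document; each statement's English description precedes it below -/
import Mathlib

section
/- Let c : ℝⁿ → ℝᵖ be continuously differentiable and set M := {y ∈ ℝⁿ : c(y) = 0}. Fix x with c(x) = 0 and γ > 0, and suppose there are constants M_c > 0, L_c > 0, σ_c > 0 such that: ‖∇c(y)‖ ≤ M_c for all y in the closed ball B̄(x;γ); ‖∇c(y) − ∇c(z)‖ ≤ L_c‖y − z‖ for all y, z ∈ B̄(x;γ); and σ_min(∇c(x)) ≥ σ_c. Then for every δ with 0 < δ ≤ min{γ/2, σ_c/(6 L_c)} and every y ∈ B̄(x;δ), one has (1/M_c)·‖c(y)‖ ≤ dist(y, M) ≤ (2/σ_c)·‖c(y)‖. -/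
/-!
The lower bound is the mean value inequality on `closedBall x γ`, applied to `y` and a zero `z`. A
zero outside that ball is at least as far from `y` as the zero `x`, because `δ ≤ γ / 2`.

For the upper bound, `x` is itself a zero, so `infDist y M ≤ δ` and only the case
`‖c y‖ < σ_c * δ / 2` matters. Then the closed ball around `y` of radius `2 / σ_c * ‖c y‖ < δ` lies
in `closedBall x (2 * δ)`, where `J` differs from `J x` by at most `2 * L_c * δ ≤ σ_c / 3`.
As `J x` has a right inverse of norm at most `1 / σ_c` (`exists_rightInverse_of_adjoint_bound`), the
quantitative surjectivity of maps close to a linear surjection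
(`ApproximatesLinearOn.surjOn_closedBall_of_nonlinearRightInverse`) yields a zero in that ball.
-/

open Metric

open ContinuousLinearMap in
/-- If `σ` bounds the singular values of `A†` from below, then `A† (A A†)⁻¹` is a right inverse of
`A` of norm at most `1 / σ`. -/
lemma exists_rightInverse_of_adjoint_bound {E F : Type*}
    [NormedAddCommGroup E] [InnerProductSpace ℝ E] [CompleteSpace E]
    [NormedAddCommGroup F] [InnerProductSpace ℝ F] [CompleteSpace F] [FiniteDimensional ℝ F]
    (A : E →L[ℝ] F) {σ : ℝ} (hσ : 0 < σ) (h : ∀ v, σ * ‖v‖ ≤ ‖adjoint A v‖) :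
    ∃ B : F → E, ∀ v, A (B v) = v ∧ ‖B v‖ ≤ σ⁻¹ * ‖v‖ := by
  have hsq : ∀ w, inner ℝ (A (adjoint A w)) w = ‖adjoint A w‖ ^ 2 := fun w => by
    rw [← adjoint_inner_right, real_inner_self_eq_norm_sq]
  have hinj : Function.Injective (A ∘L adjoint A).toLinearMap := by
    rw [injective_iff_map_eq_zero]
    intro w hw
    have hw' : A (adjoint A w) = 0 := hw
    have h1 := hsq w
    rw [hw', inner_zero_left] at h1
    have h2 : ‖adjoint A w‖ = 0 := by simpa using h1.symm
    have h3 := h w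
    rw [h2] at h3
    have h4 : ‖w‖ ≤ 0 := by
      by_contra! hc
      nlinarith [mul_pos hσ hc]
    exact norm_le_zero_iff.mp h4
  have hsurj := LinearMap.injective_iff_surjective.mp hinj
  choose g hg using hsurj
  refine ⟨fun v => adjoint A (g v), fun v => ⟨hg v, ?_⟩⟩
  have hgv : A (adjoint A (g v)) = v := hg v
  have h1 := hsq (g v)
  rw [hgv] at h1
  have h2 := real_inner_le_norm v (g v)
  have h3 := h (g v)
  show ‖adjoint A (g v)‖ ≤ σ⁻¹ * ‖v‖
  rw [inv_mul_eq_div, le_div_iff₀ hσ]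
  rcases (norm_nonneg (adjoint A (g v))).eq_or_lt with h0 | h0
  · rw [← h0]; simp
  · refine le_of_mul_le_mul_right ?_ h0
    nlinarith [mul_le_mul_of_nonneg_left h3 (norm_nonneg v),
      mul_le_mul_of_nonneg_left h2 hσ.le]

/-- Local two-sided error bound between `‖c(y)‖` and the distance
to the zero set `M = {y : c y = 0}` near a feasible point `x`. The Jacobian of `c`
at `y` is `J y`, so that the matrix `∇c(y)` of the paper is its adjoint. -/
theorem stmt1 {n p : ℕ}
    (c : EuclideanSpace ℝ (Fin n) → EuclideanSpace ℝ (Fin p))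
    (J : EuclideanSpace ℝ (Fin n) → (EuclideanSpace ℝ (Fin n) →L[ℝ] EuclideanSpace ℝ (Fin p)))
    (hderiv : ∀ y, HasFDerivAt c (J y) y) (hJcont : Continuous J)
    (x : EuclideanSpace ℝ (Fin n)) (hcx : c x = 0)
    (γ M_c L_c σ_c : ℝ) (hγ : 0 < γ) (hMc : 0 < M_c) (hLc : 0 < L_c) (hσc : 0 < σ_c)
    (hJbound : ∀ y ∈ closedBall x γ, ‖J y‖ ≤ M_c)
    (hJLip : ∀ y ∈ closedBall x γ, ∀ z ∈ closedBall x γ, ‖J y - J z‖ ≤ L_c * ‖y - z‖)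
    (hσmin : ∀ v : EuclideanSpace ℝ (Fin p), σ_c * ‖v‖ ≤ ‖(ContinuousLinearMap.adjoint (J x)) v‖) :
    ∀ δ : ℝ, 0 < δ → δ ≤ min (γ / 2) (σ_c / (6 * L_c)) →
      ∀ y ∈ closedBall x δ,
        (1 / M_c) * ‖c y‖ ≤ infDist y {z | c z = 0} ∧
        infDist y {z | c z = 0} ≤ (2 / σ_c) * ‖c y‖ := by
  intro δ hδ hδle y hy
  have hδγ : δ ≤ γ / 2 := hδle.trans (min_le_left _ _)
  have hδσ : L_c * (2 * δ) ≤ σ_c / 3 := by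
    have h := hδle.trans (min_le_right _ _)
    rw [le_div_iff₀ (by positivity)] at h
    linarith
  have hyx : dist y x ≤ δ := hy
  have hyγ : y ∈ closedBall x γ := mem_closedBall.mpr (by linarith)
  have hxγ : x ∈ closedBall x γ := mem_closedBall_self hγ.le
  have hmv : ∀ z ∈ closedBall x γ, c z = 0 → ‖c y‖ ≤ M_c * dist y z := by
    intro z hz hcz
    have h := (convex_closedBall x γ).norm_image_sub_le_of_norm_hasFDerivWithin_le
      (fun w _ => (hderiv w).hasFDerivWithinAt) hJbound hz hyγ
    rwa [hcz, sub_zero, ← dist_eq_norm] at h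
  constructor
  · refine (le_infDist ⟨x, hcx⟩).mpr fun z hz => ?_
    rw [one_div, inv_mul_eq_div, div_le_iff₀' hMc]
    by_cases hzγ : z ∈ closedBall x γ
    · exact hmv z hzγ hz
    · have hzx : γ < dist z x := by simpa using hzγ
      have htri := dist_triangle z y x
      rw [dist_comm z y] at htri
      exact (hmv x hxγ hcx).trans (mul_le_mul_of_nonneg_left (by linarith) hMc.le)
  · rcases le_or_gt δ (2 / σ_c * ‖c y‖) with hbig | hsmall
    · exact (infDist_le_dist_of_mem (show x ∈ {z | c z = 0} from hcx)).trans (hyx.trans hbig)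
    · obtain ⟨B, hB⟩ := exists_rightInverse_of_adjoint_bound (J x) hσc hσmin
      let R : (J x).NonlinearRightInverse :=
        { toFun := B
          nnnorm := ⟨σ_c⁻¹, by positivity⟩
          bound' := fun v => (hB v).2
          right_inv' := fun v => (hB v).1 }
      have hsub : closedBall x (2 * δ) ⊆ closedBall x γ := closedBall_subset_closedBall (by linarith)
      have happ : ApproximatesLinearOn c (J x) (closedBall x (2 * δ))
          ⟨L_c * (2 * δ), by positivity⟩ := by
        intro u hu v hv
        refine (convex_closedBall x (2 * δ)).norm_image_sub_le_of_norm_hasFDerivWithin_le'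
          (fun w _ => (hderiv w).hasFDerivWithinAt) (fun w hw => ?_) hv hu
        refine (hJLip w (hsub hw) x hxγ).trans (mul_le_mul_of_nonneg_left ?_ hLc.le)
        rw [← dist_eq_norm]
        exact hw
      have hball : closedBall y (2 / σ_c * ‖c y‖) ⊆ closedBall x (2 * δ) :=
        closedBall_subset_closedBall' (by linarith)
      have hsurj := happ.surjOn_closedBall_of_nonlinearRightInverse R
        (ε := 2 / σ_c * ‖c y‖) (b := y) (by positivity) hball
      -- The image ball around `c y` has radius at least `(σ_c - σ_c / 3) * (2 / σ_c) * ‖c y‖`,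
      -- hence contains `0`.
      have hzero : (0 : EuclideanSpace ℝ (Fin p)) ∈ closedBall (c y)
          ((((R.nnnorm : ℝ))⁻¹ - L_c * (2 * δ)) * (2 / σ_c * ‖c y‖)) := by
        have hR : ((R.nnnorm : ℝ))⁻¹ = σ_c := inv_inv σ_c
        rw [mem_closedBall, dist_zero_left, hR]
        have h1 : (σ_c / 2) * (2 / σ_c * ‖c y‖) = ‖c y‖ := by field_simp
        have h2 : (σ_c / 2) * (2 / σ_c * ‖c y‖)
            ≤ (σ_c - L_c * (2 * δ)) * (2 / σ_c * ‖c y‖) :=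
          mul_le_mul_of_nonneg_right (by linarith) (by positivity)
        linarith
      obtain ⟨z, hz, hcz⟩ := hsurj hzero
      refine (infDist_le_dist_of_mem (show z ∈ {z | c z = 0} from hcz)).trans ?_
      rw [dist_comm]
      exact hz
end

section
/- Let X ⊆ ℝⁿ be a nonempty closed set and y ∈ X. Let B ∈ ℝ^{n×p} with ‖B‖ ≤ M_c, let Q ∈ ℝ^{n×n} be symmetric positive semidefinite, let τ ≥ 0 be a scalar, and suppose ⟨v, BᵀQBv⟩ ≥ (σ_Q/2)‖v‖² for all v ∈ ℝᵖ with σ_Q > 0. Let c ∈ ℝᵖ satisfy (2M_c/σ_Q)·‖c‖ ≤ 1, and set d := B(BᵀQB + τ I_p)⁻¹ c. Suppose ρ ≥ 0 is such that dist(y + Qv, X) ≤ ρ‖v‖² for every v ∈ ℝⁿ with ‖v‖ ≤ 1. Then dist(y − Qd, X) ≤ (4ρ M_c² / σ_Q²)·‖c‖². -/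
/-!
The operator `A = BᵀQB + τI` is coercive with constant `σ_Q/2`: the term `τI` only helps since
`τ ≥ 0`. By Cauchy–Schwarz `(σ_Q/2)‖w‖ ≤ ‖A w‖`, so `A` is injective, hence invertible in finite
dimension, and `‖A⁻¹c‖ ≤ (2/σ_Q)‖c‖` (`norm_ringInverse_apply_le`). Therefore
`‖d‖ ≤ (2M_c/σ_Q)‖c‖ ≤ 1`, and the growth property applied at `v = -d` gives the bound.
-/

open Metric
open scoped RealInnerProductSpace

/-- The Lax–Milgram bound on the inverse of a coercive operator in finite dimension. Coercivity
makes `A` a unit, so `Ring.inverse A` is the genuine inverse and not the junk value `0`. -/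
lemma norm_ringInverse_apply_le {E : Type*} [NormedAddCommGroup E] [InnerProductSpace ℝ E]
    [FiniteDimensional ℝ E] (A : E →L[ℝ] E) {α : ℝ} (hα : 0 < α)
    (hA : ∀ v : E, α * ‖v‖ ^ 2 ≤ ⟪v, A v⟫) (c : E) :
    α * ‖Ring.inverse A c‖ ≤ ‖c‖ := by
  have hbelow : ∀ v : E, α * ‖v‖ ≤ ‖A v‖ := by
    intro v
    rcases (norm_nonneg v).eq_or_lt with h0 | hpos
    · rw [← h0, mul_zero]
      exact norm_nonneg _
    · have h := (hA v).trans (real_inner_le_norm v (A v))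
      refine le_of_mul_le_mul_left ?_ hpos
      linarith
  have hinj : Function.Injective A := by
    refine (injective_iff_map_eq_zero A).2 fun v hv => ?_
    have h := hbelow v
    rw [hv, norm_zero] at h
    exact norm_le_zero_iff.1 (nonpos_of_mul_nonpos_right h hα)
  have : CompleteSpace E := FiniteDimensional.complete ℝ E
  have hunit : IsUnit A := ContinuousLinearMap.isUnit_iff_bijective.2
    ⟨hinj, (LinearMap.injective_iff_surjective (f := (A : E →ₗ[ℝ] E))).1 hinj⟩
  have hAc : A (Ring.inverse A c) = c :=
    congrArg (fun T : E →L[ℝ] E => T c) (Ring.mul_inverse_cancel A hunit)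
  simpa only [hAc] using hbelow (Ring.inverse A c)

/-- Under the projective-mapping quadratic distance-growth property
`dist(y + Qv, X) ≤ ρ‖v‖²` for `‖v‖ ≤ 1`, the constraint dissolving step `y - Qd` with
`d = B(BᵀQB + τI)⁻¹c` satisfies `dist(y - Qd, X) ≤ (4ρM_c²/σ_Q²)‖c‖²`. -/
theorem stmt4 {n p : ℕ}
    (X : Set (EuclideanSpace ℝ (Fin n))) (hXne : X.Nonempty) (hXcl : IsClosed X)
    (y : EuclideanSpace ℝ (Fin n)) (hy : y ∈ X)
    (B : EuclideanSpace ℝ (Fin p) →L[ℝ] EuclideanSpace ℝ (Fin n))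
    (Q : EuclideanSpace ℝ (Fin n) →L[ℝ] EuclideanSpace ℝ (Fin n))
    (τ M_c σ_Q ρ : ℝ) (hτ : 0 ≤ τ) (hσQ : 0 < σ_Q) (hρ : 0 ≤ ρ)
    (hQsa : IsSelfAdjoint Q)
    (hQpsd : ∀ u : EuclideanSpace ℝ (Fin n), 0 ≤ ⟪u, Q u⟫)
    (hBn : ‖B‖ ≤ M_c)
    (hcoer : ∀ v : EuclideanSpace ℝ (Fin p),
      σ_Q / 2 * ‖v‖ ^ 2 ≤ ⟪v, ((ContinuousLinearMap.adjoint B) (Q (B v)))⟫)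
    (c : EuclideanSpace ℝ (Fin p)) (hc : 2 * M_c / σ_Q * ‖c‖ ≤ 1)
    (d : EuclideanSpace ℝ (Fin n))
    (hd : d = B (Ring.inverse ((ContinuousLinearMap.adjoint B).comp (Q.comp B) +
      τ • (1 : EuclideanSpace ℝ (Fin p) →L[ℝ] EuclideanSpace ℝ (Fin p))) c))
    (hgrowth : ∀ v : EuclideanSpace ℝ (Fin n), ‖v‖ ≤ 1 →
      infDist (y + Q v) X ≤ ρ * ‖v‖ ^ 2) :
    infDist (y - Q d) X ≤ 4 * ρ * M_c ^ 2 / σ_Q ^ 2 * ‖c‖ ^ 2 := by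
  have hw := norm_ringInverse_apply_le
    ((ContinuousLinearMap.adjoint B).comp (Q.comp B) +
      τ • (1 : EuclideanSpace ℝ (Fin p) →L[ℝ] EuclideanSpace ℝ (Fin p)))
    (half_pos hσQ) (fun v => by
      have h : ⟪v, ((ContinuousLinearMap.adjoint B).comp (Q.comp B) +
          τ • (1 : EuclideanSpace ℝ (Fin p) →L[ℝ] EuclideanSpace ℝ (Fin p))) v⟫ =
          ⟪v, (ContinuousLinearMap.adjoint B) (Q (B v))⟫ + τ * ‖v‖ ^ 2 := by
        change ⟪v, (ContinuousLinearMap.adjoint B) (Q (B v)) + τ • v⟫ = _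
        rw [inner_add_right, real_inner_smul_right, real_inner_self_eq_norm_sq]
      rw [h]
      have := hcoer v
      have : 0 ≤ τ * ‖v‖ ^ 2 := by positivity
      linarith) c
  have hM : 0 ≤ M_c := (norm_nonneg B).trans hBn
  have hdn : ‖d‖ ≤ 2 * M_c / σ_Q * ‖c‖ := by
    rw [hd]
    refine (B.le_of_opNorm_le hBn _).trans ?_
    rw [div_mul_eq_mul_div, le_div_iff₀ hσQ]
    nlinarith [mul_le_mul_of_nonneg_left hw hM]
  have hg := hgrowth (-d) (by rw [norm_neg]; exact hdn.trans hc)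
  rw [map_neg, ← sub_eq_add_neg, norm_neg] at hg
  calc infDist (y - Q d) X ≤ ρ * ‖d‖ ^ 2 := hg
    _ ≤ ρ * (2 * M_c / σ_Q * ‖c‖) ^ 2 := by gcongr
    _ = 4 * ρ * M_c ^ 2 / σ_Q ^ 2 * ‖c‖ ^ 2 := by ring
end

section
/- Let U ⊆ ℝⁿ be a convex set and c : ℝⁿ → ℝᵖ be differentiable with ∇c L_c-Lipschitz on U, i.e., ‖∇c(u) − ∇c(v)‖ ≤ L_c‖u − v‖ for all u, v ∈ U. Let y ∈ U, set B := ∇c(y), and let Q ∈ ℝ^{n×n} be symmetric positive semidefinite with ‖Q‖ ≤ M_Q and ‖B‖ ≤ M_c. Let τ ≥ 0 be a scalar with τ ≤ L_τ·‖c(y)‖, and suppose ⟨v, BᵀQBv⟩ ≥ (σ_Q/2)‖v‖² for all v ∈ ℝᵖ with σ_Q > 0. Set d := B(BᵀQB + τ I_p)⁻¹ c(y) and 𝒜 := y − Qd, and assume 𝒜 ∈ U. Then ‖c(𝒜)‖ ≤ ((2 L_τ σ_Q + 2 L_c M_Q² M_c²)/σ_Q²)·‖c(y)‖². -/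
/-!
Write `B = (J y)†`, `H = J y ∘ Q ∘ B + τ I` and `w = H⁻¹ (c y)`, so that `A = y - Q (B w)`.
Coercivity makes `H` invertible and gives `‖w‖ ≤ (2 / σ_Q) ‖c y‖`. Since
`c y - J y (Q (B w)) = τ w`, the linearization of `c` at `y` takes the value `τ w` at `A`,
which contributes `(2 L_τ / σ_Q) ‖c y‖²`. The first-order Taylor remainder is at most
`(L_c / 2) ‖Q (B w)‖²` (`norm_taylor_remainder_le`), which contributes
`(2 L_c M_Q² M_c² / σ_Q²) ‖c y‖²`.
No sign is prescribed for `L_c`: if `L_c < 0`, the Lipschitz bound forces `A = y`, and then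
coercivity gives `w = 0` and `c y = 0`.
-/

open scoped RealInnerProductSpace

/-- The descent lemma for vector-valued maps, with the sharp factor `1 / 2`. The set `U` need not
be open, because only the segment from `y` to `y + h` is used. -/
lemma norm_taylor_remainder_le {E F : Type*} [NormedAddCommGroup E] [NormedSpace ℝ E]
    [NormedAddCommGroup F] [NormedSpace ℝ F] {U : Set E} (hU : Convex ℝ U) {c : E → F}
    {J : E → E →L[ℝ] F} (hderiv : ∀ u ∈ U, HasFDerivAt c (J u) u) {L : ℝ}
    (hJ : ∀ u ∈ U, ∀ v ∈ U, ‖J u - J v‖ ≤ L * ‖u - v‖) {y h : E} (hy : y ∈ U)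
    (hyh : y + h ∈ U) : ‖c (y + h) - c y - J y h‖ ≤ L / 2 * ‖h‖ ^ 2 := by
  have hmem : ∀ t ∈ Set.Icc (0 : ℝ) 1, y + t • h ∈ U := fun t ht =>
    hU.add_smul_mem hy hyh ht
  have hg : ∀ t ∈ Set.Icc (0 : ℝ) 1,
      HasDerivAt (fun t : ℝ => c (y + t • h) - c y - t • J y h) (J (y + t • h) h - J y h) t := by
    intro t ht
    have h1 : HasDerivAt (fun t : ℝ => y + t • h) h t := by
      simpa using ((hasDerivAt_id t).smul_const h).const_add y
    have h2 : HasDerivAt (fun t : ℝ => t • J y h) (J y h) t := by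
      simpa using (hasDerivAt_id t).smul_const (J y h)
    exact (((hderiv _ (hmem t ht)).comp_hasDerivAt t h1).sub_const _).sub h2
  have hB : ∀ t : ℝ, HasDerivAt (fun t : ℝ => L / 2 * ‖h‖ ^ 2 * t ^ 2) (L * ‖h‖ ^ 2 * t) t := by
    intro t
    have h1 := (hasDerivAt_pow 2 t).const_mul (L / 2 * ‖h‖ ^ 2)
    have h2 : L / 2 * ‖h‖ ^ 2 * (((2 : ℕ) : ℝ) * t ^ (2 - 1)) = L * ‖h‖ ^ 2 * t := by
      norm_num
      ring
    rwa [h2] at h1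
  have key := image_norm_le_of_norm_deriv_right_le_deriv_boundary
    (fun t ht => (hg t ht).continuousAt.continuousWithinAt)
    (fun t ht => (hg t (Set.Ico_subset_Icc_self ht)).hasDerivWithinAt)
    (by simp) hB ?_ (Set.right_mem_Icc.2 zero_le_one)
  · simpa using key
  · intro t ht
    have ht' := Set.Ico_subset_Icc_self ht
    calc ‖J (y + t • h) h - J y h‖ = ‖(J (y + t • h) - J y) h‖ := rfl
      _ ≤ ‖J (y + t • h) - J y‖ * ‖h‖ := ContinuousLinearMap.le_opNorm _ _
      _ ≤ L * ‖y + t • h - y‖ * ‖h‖ := by gcongr; exact hJ _ (hmem t ht') _ hy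
      _ = L * ‖h‖ ^ 2 * t := by
        rw [add_sub_cancel_left, norm_smul, Real.norm_of_nonneg ht.1]; ring

/-- A coercive operator on a finite-dimensional space is a unit, so `Ring.inverse` is a genuine
inverse. -/
lemma isUnit_of_coercive {F : Type*} [NormedAddCommGroup F] [InnerProductSpace ℝ F]
    [FiniteDimensional ℝ F] (H : F →L[ℝ] F) {s : ℝ} (hs : 0 < s)
    (hH : ∀ v, s * ‖v‖ ^ 2 ≤ ⟪v, H v⟫) : IsUnit H := by
  have hinj : Function.Injective H := by
    rw [injective_iff_map_eq_zero]
    intro v hv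
    have h1 := hH v
    rw [hv, inner_zero_right] at h1
    have h2 : ‖v‖ ^ 2 ≤ 0 := by
      by_contra hlt
      push Not at hlt
      nlinarith [mul_pos hs hlt]
    simpa using le_antisymm h2 (sq_nonneg _)
  have hsurj : Function.Surjective H :=
    LinearMap.injective_iff_surjective (f := H.toLinearMap).1 hinj
  rw [ContinuousLinearMap.isUnit_iff_bijective]
  exact ⟨hinj, hsurj⟩

/-- Quadratic decrease of the feasibility violation after the
constraint dissolving step `𝒜 = y - Qd`, `d = B(BᵀQB + τI)⁻¹ c(y)` with `B = ∇c(y)`: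
`‖c(𝒜)‖ ≤ ((2L_τσ_Q + 2L_c M_Q² M_c²)/σ_Q²)‖c(y)‖²`. Here `J u` is the Jacobian
of `c` at `u`, so `∇c(u)` of the paper is its adjoint. -/
theorem stmt5 {n p : ℕ}
    (U : Set (EuclideanSpace ℝ (Fin n))) (hU : Convex ℝ U)
    (c : EuclideanSpace ℝ (Fin n) → EuclideanSpace ℝ (Fin p))
    (J : EuclideanSpace ℝ (Fin n) → (EuclideanSpace ℝ (Fin n) →L[ℝ] EuclideanSpace ℝ (Fin p)))
    (hderiv : ∀ u ∈ U, HasFDerivAt c (J u) u)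
    (L_c M_Q M_c L_τ σ_Q τ : ℝ) (hσQ : 0 < σ_Q) (hτ0 : 0 ≤ τ)
    (hJLip : ∀ u ∈ U, ∀ v ∈ U, ‖J u - J v‖ ≤ L_c * ‖u - v‖)
    (y : EuclideanSpace ℝ (Fin n)) (hy : y ∈ U)
    (Q : EuclideanSpace ℝ (Fin n) →L[ℝ] EuclideanSpace ℝ (Fin n))
    (hQsa : IsSelfAdjoint Q)
    (hQpsd : ∀ u : EuclideanSpace ℝ (Fin n), 0 ≤ ⟪u, Q u⟫)
    (hQn : ‖Q‖ ≤ M_Q) (hBn : ‖ContinuousLinearMap.adjoint (J y)‖ ≤ M_c)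
    (hτ : τ ≤ L_τ * ‖c y‖)
    (hcoer : ∀ v : EuclideanSpace ℝ (Fin p),
      σ_Q / 2 * ‖v‖ ^ 2 ≤ ⟪v, (J y) (Q ((ContinuousLinearMap.adjoint (J y)) v))⟫)
    (d A : EuclideanSpace ℝ (Fin n))
    (hd : d = (ContinuousLinearMap.adjoint (J y))
      (Ring.inverse ((J y).comp (Q.comp (ContinuousLinearMap.adjoint (J y))) +
        τ • (1 : EuclideanSpace ℝ (Fin p) →L[ℝ] EuclideanSpace ℝ (Fin p))) (c y)))
    (hA : A = y - Q d) (hAU : A ∈ U) :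
    ‖c A‖ ≤ (2 * L_τ * σ_Q + 2 * L_c * M_Q ^ 2 * M_c ^ 2) / σ_Q ^ 2 * ‖c y‖ ^ 2 := by
  set B := ContinuousLinearMap.adjoint (J y) with hBdef
  set H := (J y).comp (Q.comp B) +
    τ • (1 : EuclideanSpace ℝ (Fin p) →L[ℝ] EuclideanSpace ℝ (Fin p)) with hHdef
  set w := Ring.inverse H (c y) with hw
  have hHapp : ∀ v, H v = J y (Q (B v)) + τ • v := fun v => by simp [hHdef]
  have hHcoer : ∀ v, σ_Q / 2 * ‖v‖ ^ 2 ≤ ⟪v, H v⟫ := by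
    intro v
    rw [hHapp, inner_add_right, inner_smul_right, real_inner_self_eq_norm_sq]
    have := mul_nonneg hτ0 (sq_nonneg ‖v‖)
    linarith [hcoer v]
  have hunit := isUnit_of_coercive H (half_pos hσQ) hHcoer
  have hHw : H w = c y := by
    have := congrArg (fun T => T (c y)) (Ring.mul_inverse_cancel H hunit)
    simpa using this
  have hwn : ‖w‖ ≤ 2 / σ_Q * ‖c y‖ := by
    have h1 := (hHcoer w).trans (real_inner_le_norm _ _)
    rw [hHw] at h1
    rcases (norm_nonneg w).eq_or_lt with h0 | h0
    · rw [← h0]; positivity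
    · have h2 : σ_Q / 2 * ‖w‖ ≤ ‖c y‖ := by
        refine le_of_mul_le_mul_left ?_ h0
        linarith
      rw [div_mul_eq_mul_div, le_div_iff₀ hσQ]
      linarith
  have hτw : c y - J y (Q d) = τ • w := by
    rw [hd, ← hHw, hHapp]; abel
  rcases lt_or_ge L_c 0 with hL | hL
  · -- A negative Lipschitz constant forces `A = y`, that is `Q d = 0`.
    have hAy : A - y = 0 := by
      have h1 := (norm_nonneg _).trans (hJLip A hAU y hy)
      have h2 : ‖A - y‖ ≤ 0 := by
        by_contra hlt
        push Not at hlt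
        nlinarith [mul_neg_of_neg_of_pos hL hlt]
      simpa using h2
    have hQd : Q d = 0 := by
      rw [hA] at hAy; simpa using hAy
    have hw0 : w = 0 := by
      have h1 := hcoer w
      rw [← hd, hQd, map_zero, inner_zero_right] at h1
      have h2 : ‖w‖ ^ 2 ≤ 0 := by
        by_contra hlt
        push Not at hlt
        nlinarith [mul_pos hσQ hlt]
      simpa using le_antisymm h2 (sq_nonneg _)
    have hc0 : c y = 0 := by rw [← hHw, hw0, map_zero]
    rw [sub_eq_zero.1 hAy, hc0]
    simp
  · have hAeq : A = y + -(Q d) := by rw [hA, sub_eq_add_neg]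
    have hrem := norm_taylor_remainder_le hU hderiv hJLip hy (hAeq ▸ hAU)
    rw [← hAeq, norm_neg] at hrem
    have hMQ : 0 ≤ M_Q := (norm_nonneg _).trans hQn
    have hMc : 0 ≤ M_c := (norm_nonneg _).trans hBn
    have hQd : ‖Q d‖ ≤ M_Q * (M_c * (2 / σ_Q * ‖c y‖)) := by
      rw [hd]
      refine (Q.le_of_opNorm_le hQn _).trans ?_
      gcongr
      refine (B.le_of_opNorm_le hBn _).trans ?_
      gcongr
    have hlin : ‖τ • w‖ ≤ L_τ * ‖c y‖ * (2 / σ_Q * ‖c y‖) := by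
      rw [norm_smul, Real.norm_of_nonneg hτ0]
      exact mul_le_mul hτ hwn (norm_nonneg _) (hτ0.trans hτ)
    have hsplit : c A = τ • w + (c A - c y - J y (-(Q d))) := by
      rw [← hτw, map_neg]; abel
    calc ‖c A‖ ≤ ‖τ • w‖ + ‖c A - c y - J y (-(Q d))‖ := by
          conv_lhs => rw [hsplit]
          exact norm_add_le _ _
      _ ≤ L_τ * ‖c y‖ * (2 / σ_Q * ‖c y‖) +
          L_c / 2 * (M_Q * (M_c * (2 / σ_Q * ‖c y‖))) ^ 2 := by
        refine add_le_add hlin (hrem.trans ?_)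
        gcongr
      _ = _ := by
        field_simp
end

section
/- Let X ⊆ ℝⁿ be a nonempty closed set, U ⊆ ℝⁿ a convex set, and c : ℝⁿ → ℝᵖ differentiable with ∇c L_c-Lipschitz on U and ‖∇c(u)‖ ≤ M_c for all u ∈ U. Let y ∈ X ∩ U, B := ∇c(y), Q ∈ ℝ^{n×n} symmetric positive semidefinite with ‖Q‖ ≤ M_Q, τ ≥ 0 with τ ≤ L_τ‖c(y)‖, and ⟨v, BᵀQBv⟩ ≥ (σ_Q/2)‖v‖² for all v ∈ ℝᵖ with σ_Q > 0. Assume (2M_c/σ_Q)‖c(y)‖ ≤ 1 and dist(y + Qv, X) ≤ L_ρ‖v‖² for every ‖v‖ ≤ 1. Set d := B(BᵀQB + τ I_p)⁻¹ c(y) and 𝒜 := y − Qd, and let r ∈ ℝⁿ with ‖r‖ ≤ M_ξ‖c(y)‖². Then every w ∈ X with ‖(𝒜 + r) − w‖ = dist(𝒜 + r, X), provided 𝒜 ∈ U, w ∈ U and at least one projection w' of 𝒜 onto X lies in U, satisfies ‖c(w)‖ ≤ R·‖c(y)‖², where R := (12 L_ρ M_c³ + 2 L_τ σ_Q + 2 L_c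 M_Q² M_c² + 2 σ_Q² M_c M_ξ)/σ_Q². -/
/-! With `z = (BᵀQB + τI)⁻¹ c(y)`, coercivity gives `‖z‖ ≤ (2/σ_Q)‖c(y)‖`, hence
`‖d‖ ≤ (2M_c/σ_Q)‖c(y)‖ ≤ 1`. Since `Bᵀ(Qd) = c(y) - τz`, the second-order Taylor bound
(`norm_taylor_one_le`) gives `‖c(𝒜)‖ ≤ τ‖z‖ + (L_c/2)‖Qd‖²`. The triangle inequality for distances
to `X` gives `‖w - 𝒜‖ ≤ dist(𝒜, X) + 2‖r‖ ≤ L_ρ‖d‖² + 2‖r‖`, and the mean value inequality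
transfers the bound from `𝒜` to `w`.

The signs of `L_c` and `L_ρ` are not assumed: they are nonnegative once `c(y) ≠ 0`, because then
coercivity forces `Qd ≠ 0`, so the Lipschitz and growth bounds are tested on nonzero vectors. When
`c(y) = 0` the step is trivial and `w = y`. -/

open Metric
open scoped RealInnerProductSpace

/-- First-order Taylor remainder with the sharp constant `L / 2` for a map whose derivative is
Lipschitz on a convex set; only the Lipschitz bound relative to the base point is needed. -/
theorem norm_taylor_one_le {E F : Type*} [NormedAddCommGroup E] [NormedSpace ℝ E]
    [NormedAddCommGroup F] [NormedSpace ℝ F] {U : Set E} (hU : Convex ℝ U) {c : E → F}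
    {J : E → E →L[ℝ] F} (hderiv : ∀ u ∈ U, HasFDerivAt c (J u) u) {L : ℝ} {y a : E}
    (hy : y ∈ U) (ha : a ∈ U) (hL : ∀ u ∈ U, ‖J u - J y‖ ≤ L * ‖u - y‖) :
    ‖c a - c y - J y (a - y)‖ ≤ L / 2 * ‖a - y‖ ^ 2 := by
  set h := a - y with hh
  have hmem : ∀ t ∈ Set.Icc (0 : ℝ) 1, y + t • h ∈ U := fun t ht =>
    hU.add_smul_sub_mem hy ha ht
  have hg : ∀ t ∈ Set.Icc (0 : ℝ) 1,
      HasDerivAt (fun t : ℝ => c (y + t • h) - c y - t • J y h)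
        (J (y + t • h) h - J y h) t := by
    intro t ht
    have h1 : HasDerivAt (fun t : ℝ => y + t • h) h t := by
      simpa using ((hasDerivAt_id t).smul_const h).const_add y
    have h2 := (hderiv _ (hmem t ht)).comp_hasDerivAt t h1
    have h3 : HasDerivAt (fun t : ℝ => t • J y h) (J y h) t := by
      simpa using (hasDerivAt_id t).smul_const (J y h)
    exact (h2.sub_const (c y)).sub h3
  have key := image_norm_le_of_norm_deriv_right_le_deriv_boundary
    (f := fun t : ℝ => c (y + t • h) - c y - t • J y h)
    (f' := fun t => J (y + t • h) h - J y h) (a := 0) (b := 1)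
    (B := fun t => L / 2 * ‖h‖ ^ 2 * t ^ 2) (B' := fun t => L * ‖h‖ ^ 2 * t)
    (fun t ht => (hg t ht).continuousAt.continuousWithinAt)
    (fun t ht => (hg t (Set.Ico_subset_Icc_self ht)).hasDerivWithinAt)
    (by simp)
    (fun t => by
      have := (hasDerivAt_pow 2 t).const_mul (L / 2 * ‖h‖ ^ 2)
      refine this.congr_deriv ?_
      norm_num
      ring)
    (fun t ht => by
      have h1 := hL _ (hmem t (Set.Ico_subset_Icc_self ht))
      rw [add_sub_cancel_left, norm_smul, Real.norm_of_nonneg ht.1] at h1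
      calc ‖J (y + t • h) h - J y h‖ = ‖(J (y + t • h) - J y) h‖ := by simp
        _ ≤ ‖J (y + t • h) - J y‖ * ‖h‖ := ContinuousLinearMap.le_opNorm _ _
        _ ≤ L * (t * ‖h‖) * ‖h‖ := by gcongr
        _ = L * ‖h‖ ^ 2 * t := by ring)
    (Set.right_mem_Icc.2 zero_le_one)
  simpa [hh] using key

/-- A coercive operator on a finite-dimensional space is invertible, so `Ring.inverse` is its
genuine inverse. -/
theorem apply_inverse_of_coercive {p : ℕ}
    (T : EuclideanSpace ℝ (Fin p) →L[ℝ] EuclideanSpace ℝ (Fin p)) {s : ℝ} (hs : 0 < s)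
    (hT : ∀ v, s * ‖v‖ ^ 2 ≤ ⟪v, T v⟫) (b : EuclideanSpace ℝ (Fin p)) :
    T (Ring.inverse T b) = b := by
  have hinj : Function.Injective T := by
    refine (injective_iff_map_eq_zero T).2 fun v hv => ?_
    have h := hT v
    rw [hv, inner_zero_right] at h
    have h2 : ‖v‖ ^ 2 = 0 := le_antisymm (nonpos_of_mul_nonpos_right h hs) (by positivity)
    simpa using h2
  have hu : IsUnit T := ContinuousLinearMap.isUnit_iff_bijective.2
    ⟨hinj, (LinearMap.injective_iff_surjective (f := T.toLinearMap)).1 hinj⟩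
  have h := Ring.mul_inverse_cancel T hu
  simpa using congrArg (fun S => S b) h

/-- One step quadratic decrease of the feasibility violation under
inexact projection: for `w ∈ Π_X(𝒜 + r)` with `‖r‖ ≤ M_ξ‖c(y)‖²`,
`‖c(w)‖ ≤ R ‖c(y)‖²` with
`R = (12L_ρM_c³ + 2L_τσ_Q + 2L_cM_Q²M_c² + 2σ_Q²M_cM_ξ)/σ_Q²`. -/
theorem stmt7 {n p : ℕ}
    (X : Set (EuclideanSpace ℝ (Fin n))) (hXne : X.Nonempty) (hXcl : IsClosed X)
    (U : Set (EuclideanSpace ℝ (Fin n))) (hU : Convex ℝ U)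
    (c : EuclideanSpace ℝ (Fin n) → EuclideanSpace ℝ (Fin p))
    (J : EuclideanSpace ℝ (Fin n) → (EuclideanSpace ℝ (Fin n) →L[ℝ] EuclideanSpace ℝ (Fin p)))
    (hderiv : ∀ u ∈ U, HasFDerivAt c (J u) u)
    (L_c L_ρ M_Q M_c M_ξ L_τ σ_Q τ : ℝ) (hσQ : 0 < σ_Q) (hτ0 : 0 ≤ τ)
    (hJLip : ∀ u ∈ U, ∀ v ∈ U, ‖J u - J v‖ ≤ L_c * ‖u - v‖)
    (hJb : ∀ u ∈ U, ‖J u‖ ≤ M_c)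
    (y : EuclideanSpace ℝ (Fin n)) (hyX : y ∈ X) (hyU : y ∈ U)
    (Q : EuclideanSpace ℝ (Fin n) →L[ℝ] EuclideanSpace ℝ (Fin n))
    (hQsa : IsSelfAdjoint Q)
    (hQpsd : ∀ u : EuclideanSpace ℝ (Fin n), 0 ≤ ⟪u, Q u⟫)
    (hQn : ‖Q‖ ≤ M_Q)
    (hτ : τ ≤ L_τ * ‖c y‖)
    (hcoer : ∀ v : EuclideanSpace ℝ (Fin p),
      σ_Q / 2 * ‖v‖ ^ 2 ≤ ⟪v, (J y) (Q ((ContinuousLinearMap.adjoint (J y)) v))⟫)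
    (hsmall : 2 * M_c / σ_Q * ‖c y‖ ≤ 1)
    (hgrowth : ∀ v : EuclideanSpace ℝ (Fin n), ‖v‖ ≤ 1 →
      infDist (y + Q v) X ≤ L_ρ * ‖v‖ ^ 2)
    (d A r : EuclideanSpace ℝ (Fin n))
    (hd : d = (ContinuousLinearMap.adjoint (J y))
      (Ring.inverse ((J y).comp (Q.comp (ContinuousLinearMap.adjoint (J y))) +
        τ • (1 : EuclideanSpace ℝ (Fin p) →L[ℝ] EuclideanSpace ℝ (Fin p))) (c y)))
    (hA : A = y - Q d) (hAU : A ∈ U)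
    (hr : ‖r‖ ≤ M_ξ * ‖c y‖ ^ 2)
    (hw' : ∃ w' ∈ X, ‖A - w'‖ = infDist A X ∧ w' ∈ U) :
    ∀ w ∈ X, ‖(A + r) - w‖ = infDist (A + r) X → w ∈ U →
      ‖c w‖ ≤ (12 * L_ρ * M_c ^ 3 + 2 * L_τ * σ_Q + 2 * L_c * M_Q ^ 2 * M_c ^ 2
          + 2 * σ_Q ^ 2 * M_c * M_ξ) / σ_Q ^ 2 * ‖c y‖ ^ 2 := by
  intro w hwX hw hwU
  set B := ContinuousLinearMap.adjoint (J y) with hB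
  set T := (J y).comp (Q.comp B) +
    τ • (1 : EuclideanSpace ℝ (Fin p) →L[ℝ] EuclideanSpace ℝ (Fin p)) with hTdef
  have hTv : ∀ v, T v = J y (Q (B v)) + τ • v := fun v => by simp [hTdef]
  have hT : ∀ v, σ_Q / 2 * ‖v‖ ^ 2 ≤ ⟪v, T v⟫ := by
    intro v
    rw [hTv, inner_add_right, inner_smul_right, real_inner_self_eq_norm_sq]
    have := hcoer v
    have : 0 ≤ τ * ‖v‖ ^ 2 := by positivity
    linarith
  have hTz := apply_inverse_of_coercive T (half_pos hσQ) hT (c y)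
  set z := Ring.inverse T (c y) with hz
  have hMc : 0 ≤ M_c := (norm_nonneg _).trans (hJb y hyU)
  have hMQ : 0 ≤ M_Q := (norm_nonneg _).trans hQn
  have hdist : ‖w - A‖ ≤ infDist A X + 2 * ‖r‖ := by
    have h1 : infDist (A + r) X ≤ infDist A X + dist (A + r) A := infDist_le_infDist_add_dist
    have h2 : ‖w - A‖ ≤ ‖A + r - w‖ + ‖r‖ := by
      have : w - A = r - (A + r - w) := by abel
      rw [this]
      linarith [norm_sub_le r (A + r - w)]
    have h3 : dist (A + r) A = ‖r‖ := by simp [dist_eq_norm]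
    linarith
  rcases eq_or_ne (c y) 0 with hc | hc
  · have hd0 : d = 0 := by rw [hd, hz, hc]; simp
    have hAy : A = y := by rw [hA, hd0]; simp
    have hr0 : ‖r‖ ≤ 0 := by simpa [hc] using hr
    rw [hAy, infDist_zero_of_mem hyX] at hdist
    have hwy : w = y := sub_eq_zero.1 (norm_le_zero_iff.1 (by linarith))
    simp [hwy, hc]
  have hz0 : z ≠ 0 := by
    intro h
    rw [h, map_zero] at hTz
    exact hc hTz.symm
  have hzpos : 0 < ‖z‖ := norm_pos_iff.2 hz0
  have hzn : ‖z‖ ≤ 2 / σ_Q * ‖c y‖ := by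
    have h1 := (hT z).trans (real_inner_le_norm z (T z))
    rw [hTz] at h1
    have h2 : σ_Q / 2 * ‖z‖ ≤ ‖c y‖ := by
      refine le_of_mul_le_mul_left ?_ hzpos
      linarith [h1, show ‖z‖ * (σ_Q / 2 * ‖z‖) = σ_Q / 2 * ‖z‖ ^ 2 by ring]
    calc ‖z‖ = 2 / σ_Q * (σ_Q / 2 * ‖z‖) := by field_simp
      _ ≤ 2 / σ_Q * ‖c y‖ := by gcongr
  have hdn : ‖d‖ ≤ 2 * M_c / σ_Q * ‖c y‖ := by
    have hBn : ‖B‖ ≤ M_c := by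
      rw [hB, LinearIsometryEquiv.norm_map]
      exact hJb y hyU
    calc ‖d‖ ≤ ‖B‖ * ‖z‖ := by rw [hd]; exact B.le_opNorm z
      _ ≤ M_c * (2 / σ_Q * ‖c y‖) := by gcongr
      _ = _ := by ring
  have hQd : Q d ≠ 0 := by
    intro h
    have h1 := hcoer z
    rw [← hd, h, map_zero, inner_zero_right] at h1
    have : 0 < σ_Q / 2 * ‖z‖ ^ 2 := by positivity
    linarith
  have hdpos : 0 < ‖d‖ := norm_pos_iff.2 fun h => hQd (by rw [h, map_zero])
  have hAy : ‖A - y‖ = ‖Q d‖ := by simp [hA]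
  have hLc : 0 ≤ L_c := by
    have h := (norm_nonneg _).trans (hJLip A hAU y hyU)
    rw [hAy] at h
    exact nonneg_of_mul_nonneg_left h (norm_pos_iff.2 hQd)
  have hinf : infDist A X ≤ L_ρ * ‖d‖ ^ 2 := by
    have h := hgrowth (-d) (by rw [norm_neg]; exact hdn.trans hsmall)
    rwa [map_neg, ← sub_eq_add_neg, ← hA, norm_neg] at h
  have hLρ : 0 ≤ L_ρ := nonneg_of_mul_nonneg_left (infDist_nonneg.trans hinf) (by positivity)
  have hcA : ‖c A‖ ≤ L_τ * ‖c y‖ * (2 / σ_Q * ‖c y‖) +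
      L_c / 2 * (M_Q * (2 * M_c / σ_Q * ‖c y‖)) ^ 2 := by
    have h1 := norm_taylor_one_le hU hderiv hyU hAU fun u hu => hJLip u hu y hyU
    have h2 : c A = τ • z + (c A - c y - J y (A - y)) := by
      have h3 : A - y = -(Q (B z)) := by rw [hA, hd]; abel
      have h4 : c y = J y (Q (B z)) + τ • z := by rw [← hTv, hTz]
      rw [h3, map_neg, h4]
      abel
    rw [h2]
    refine (norm_add_le _ _).trans (add_le_add ?_ (h1.trans ?_))
    · rw [norm_smul, Real.norm_of_nonneg hτ0]
      exact mul_le_mul hτ hzn (norm_nonneg _) (hτ0.trans hτ)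
    · rw [hAy]
      have : ‖Q d‖ ≤ M_Q * (2 * M_c / σ_Q * ‖c y‖) :=
        (Q.le_opNorm d).trans (by gcongr)
      gcongr
  have hcw : ‖c w - c A‖ ≤ M_c * ‖w - A‖ :=
    hU.norm_image_sub_le_of_norm_hasFDerivWithin_le
      (fun u hu => (hderiv u hu).hasFDerivWithinAt) hJb hAU hwU
  have hwA : ‖w - A‖ ≤ L_ρ * (2 * M_c / σ_Q * ‖c y‖) ^ 2 + 2 * (M_ξ * ‖c y‖ ^ 2) := by
    have : L_ρ * ‖d‖ ^ 2 ≤ L_ρ * (2 * M_c / σ_Q * ‖c y‖) ^ 2 := by gcongr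
    linarith
  have hfin : ‖c w‖ ≤ ‖c A‖ + ‖c w - c A‖ := by
    simpa using norm_add_le (c A) (c w - c A)
  have hmul := mul_le_mul_of_nonneg_left hwA hMc
  -- The sum of the bounds has `4 L_ρ M_c³` in place of `12 L_ρ M_c³`.
  have hslack : 0 ≤ 8 * L_ρ * M_c ^ 3 / σ_Q ^ 2 * ‖c y‖ ^ 2 := by positivity
  refine (hfin.trans (add_le_add hcA (hcw.trans hmul))).trans ?_
  refine (le_add_of_nonneg_right hslack).trans (le_of_eq ?_)
  field_simp
  ring
end

section
/- Let X ⊆ ℝⁿ be nonempty and closed, c : ℝⁿ → ℝᵖ continuously differentiable, M := {y : c(y) = 0}, and fix x ∈ X with c(x) = 0. Let Q assign to each y ∈ B̄(x;γ) a symmetric positive semidefinite n×n matrix, and let τ : [0,∞) → [0,∞) satisfy τ(s) ≤ L_τ·s for s ∈ [0,1]. Define d(y) := ∇c(y)(∇c(y)ᵀQ(y)∇c(y) + τ(‖c(y)‖)I_p)⁻¹ c(y) and 𝒜(y) := y − Q(y)d(y). Suppose γ ∈ (0,1] and constants M_c, M_Q, M_ξ, L_c, L_ρ, σ_Q, σ_c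 > 0 are such that for all y, z ∈ B̄(x;γ): ‖∇c(y)‖ ≤ M_c, ‖Q(y)‖ ≤ M_Q, ‖∇c(y) − ∇c(z)‖ ≤ L_c‖y − z‖, ⟨v, ∇c(y)ᵀQ(y)∇c(y)v⟩ ≥ (σ_Q/2)‖v‖² for all v ∈ ℝᵖ, σ_min(∇c(x)) ≥ σ_c, and dist(y + Q(y)v, X) ≤ L_ρ‖v‖² for every y ∈ X ∩ B̄(x;γ) and ‖v‖ ≤ 1. Let δ > 0 satisfy δ ≤ γ/2, δ ≤ 1/M_c, δ ≤ σ_c/(6L_c), δ ≤ σ_Q/(2M_c²), δ ≤ γσ_Q/(σ_Q + 4M_Q M_c²), δ ≤ M_Q σ_Q/(4L_ρ M_c² + M_ξ σ_Q²), and δ ≤ σ_Q²/(2M_c·(12L_ρM_c³ + 2L_τσ_Q + 2L_cM_Q²M_c² + 2σ_Q²M_cM_ξ)); set δ' := σ_Q δ/(32 M_Q M_c² + 2σ_Q). Let {x_k} satisfy x₀ ∈ X ∩ B̄(x;δ') and, for every k, x_{k+1} ∈ X with ‖(𝒜(x_k) + r_k) − x_{k+1}‖ = dist(𝒜(x_k)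 + r_k, X) for some r_k with ‖r_k‖ ≤ M_ξ‖c(x_k)‖². Then for every k: Σ_{i=0}^{k} ‖x_{i+1} − x_i‖ ≤ (8 M_Q M_c² / σ_Q)·dist(x₀, M), and x_k ∈ X ∩ B̄(x;δ). -/
/-!
The residual `‖c (xs k)‖` is halved at every step while the iterates stay near `x`.

Coercivity of `∇cᵀQ∇c` gives `‖G⁻¹ c‖ ≤ (2/σ_Q) ‖c‖` (`norm_inverse_apply_le`), so the step
`A y - y = -Q d` has length `O(‖c y‖)`, and the growth condition on `X` shows that the projection
moves `A y + r` only by `O(‖c y‖²)`. Moreover `J Q d = c - τ G⁻¹ c`, so `c y + J y (A y - y)`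
is `O(‖c y‖²)`; with the quadratic Taylor bound (`norm_taylor_le`) and the Lipschitz bound on `c`
the new residual is at most `const * ‖c y‖²`, which is at most `‖c y‖ / 2` by the choice of `δ`.

With `K = 4 M_Q M_c / σ_Q` a step satisfies `‖xs (k+1) - xs k‖ ≤ K ‖c (xs k)‖`, hence
`∑_{i<k} ‖xs (i+1) - xs i‖ + 2 K ‖c (xs k)‖` never exceeds `2 K ‖c (xs 0)‖`. This bounds the
total movement, since `‖c (xs 0)‖ ≤ M_c dist (xs 0, M)` (`norm_le_mul_infDist`), and keeps every
iterate in the ball of radius `δ`.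
-/

open Metric
open scoped RealInnerProductSpace

/-- First-order Taylor estimate with the sharp constant `L / 2`, obtained by comparing the
remainder along the segment with `t ↦ L ‖v‖² t² / 2`. -/
lemma norm_taylor_le {E F : Type*} [NormedAddCommGroup E] [NormedSpace ℝ E]
    [NormedAddCommGroup F] [NormedSpace ℝ F]
    {c : E → F} {J : E → E →L[ℝ] F}
    (hderiv : ∀ y, HasFDerivAt c (J y) y) {s : Set E} (hs : Convex ℝ s) {L : ℝ}
    (hL : ∀ y ∈ s, ∀ z ∈ s, ‖J y - J z‖ ≤ L * ‖y - z‖)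
    {y v : E} (hy : y ∈ s) (hyv : y + v ∈ s) :
    ‖c (y + v) - c y - J y v‖ ≤ L / 2 * ‖v‖ ^ 2 := by
  have hpath : ∀ t : ℝ, HasDerivAt (fun t : ℝ => y + t • v) v t := fun t => by
    simpa using ((hasDerivAt_id t).smul_const v).const_add y
  have hf : ∀ t : ℝ, HasDerivAt (fun t : ℝ => c (y + t • v) - c y - t • J y v)
      (J (y + t • v) v - J y v) t := fun t => by
    have h1 := (hderiv (y + t • v)).comp_hasDerivAt t (hpath t)
    have h2 : HasDerivAt (fun t : ℝ => t • J y v) (J y v) t := by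
      simpa using (hasDerivAt_id t).smul_const (J y v)
    exact (h1.sub_const (c y)).sub h2
  have hB : ∀ t : ℝ, HasDerivAt (fun t : ℝ => L / 2 * ‖v‖ ^ 2 * t ^ 2) (L * ‖v‖ ^ 2 * t) t :=
    fun t => by
      refine ((hasDerivAt_pow 2 t).const_mul (L / 2 * ‖v‖ ^ 2)).congr_deriv ?_
      norm_num
      ring
  have key := image_norm_le_of_norm_deriv_right_le_deriv_boundary
    (f := fun t : ℝ => c (y + t • v) - c y - t • J y v) (a := 0) (b := 1)
    (f' := fun t => J (y + t • v) v - J y v)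
    (B := fun t : ℝ => L / 2 * ‖v‖ ^ 2 * t ^ 2) (B' := fun t => L * ‖v‖ ^ 2 * t)
    (fun t _ => (hf t).continuousAt.continuousWithinAt)
    (fun t _ => (hf t).hasDerivWithinAt) (by simp) hB
    (fun t ht => by
      have hmem : y + t • v ∈ s := hs.add_smul_mem hy hyv ⟨ht.1, ht.2.le⟩
      have h1 := (J (y + t • v) - J y).le_opNorm v
      have h2 := hL _ hmem _ hy
      rw [add_sub_cancel_left, norm_smul, Real.norm_of_nonneg ht.1] at h2
      calc ‖J (y + t • v) v - J y v‖ ≤ ‖J (y + t • v) - J y‖ * ‖v‖ := h1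
        _ ≤ L * (t * ‖v‖) * ‖v‖ := by gcongr
        _ = L * ‖v‖ ^ 2 * t := by ring)
    (Set.right_mem_Icc.2 zero_le_one)
  simpa using key

/-- The estimate `‖c y‖ ≤ M * dist(y, c⁻¹ 0)` near a zero `x` of `c`. Zeros outside the ball of
radius `γ` are at distance at least `γ / 2 ≥ ‖y - x‖` from `y`, so they do not compete with `x`. -/
lemma norm_le_mul_infDist {E F : Type*} [NormedAddCommGroup E] [NormedAddCommGroup F]
    {c : E → F} {x y : E} {γ M : ℝ} (hM : 0 < M) (hcx : c x = 0)
    (hLip : ∀ y ∈ closedBall x γ, ∀ z ∈ closedBall x γ, ‖c y - c z‖ ≤ M * ‖y - z‖)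
    (hy : ‖y - x‖ ≤ γ / 2) : ‖c y‖ ≤ M * infDist y {z | c z = 0} := by
  have h0 := norm_nonneg (y - x)
  have hyγ : y ∈ closedBall x γ := by rw [mem_closedBall, dist_eq_norm]; linarith
  have hxγ : x ∈ closedBall x γ := mem_closedBall_self (by linarith)
  have hne : Set.Nonempty {z | c z = 0} := ⟨x, hcx⟩
  suffices h : ‖c y‖ / M ≤ infDist y {z | c z = 0} by
    rwa [div_le_iff₀' hM] at h
  rw [le_infDist hne]
  intro z hz
  rw [div_le_iff₀' hM, dist_eq_norm]
  by_cases hzγ : z ∈ closedBall x γ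
  · have := hLip y hyγ z hzγ
    rwa [show c z = 0 from hz, sub_zero] at this
  · have h1 := hLip y hyγ x hxγ
    rw [hcx, sub_zero] at h1
    rw [mem_closedBall, dist_eq_norm, not_le] at hzγ
    have h2 : ‖z - x‖ ≤ ‖y - z‖ + ‖y - x‖ := by
      rw [norm_sub_rev y z]; exact norm_sub_le_norm_sub_add_norm_sub z y x
    exact h1.trans (by gcongr; linarith)

/-- A coercive operator on a finite-dimensional space is invertible, and its inverse has norm
at most the reciprocal of the coercivity constant. -/
lemma norm_inverse_apply_le {F : Type*} [NormedAddCommGroup F] [InnerProductSpace ℝ F]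
    [FiniteDimensional ℝ F] {T : F →L[ℝ] F} {σ : ℝ} (hσ : 0 < σ)
    (hT : ∀ v, σ * ‖v‖ ^ 2 ≤ ⟪v, T v⟫) (w : F) :
    T (Ring.inverse T w) = w ∧ σ * ‖Ring.inverse T w‖ ≤ ‖w‖ := by
  have hlow : ∀ v, σ * ‖v‖ ≤ ‖T v‖ := fun v => by
    rcases (norm_nonneg v).eq_or_lt with h | h
    · rw [← h]; simp
    · have := (hT v).trans (real_inner_le_norm v (T v))
      refine le_of_mul_le_mul_left ?_ h
      linarith [this, show ‖v‖ * (σ * ‖v‖) = σ * ‖v‖ ^ 2 by ring]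
  have hinj : Function.Injective T := by
    refine (injective_iff_map_eq_zero T).2 fun v hv => ?_
    have := hlow v
    rw [hv, norm_zero] at this
    exact norm_le_zero_iff.1 (nonpos_of_mul_nonpos_right this hσ)
  have hunit : IsUnit T := by
    have : CompleteSpace F := FiniteDimensional.complete ℝ F
    rw [ContinuousLinearMap.isUnit_iff_bijective]
    exact ⟨hinj, (LinearMap.injective_iff_surjective (f := (T : F →ₗ[ℝ] F))).1 hinj⟩
  have h1 : T (Ring.inverse T w) = w := by
    have := congrArg (fun S : F →L[ℝ] F => S w) (Ring.mul_inverse_cancel T hunit)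
    simpa using this
  exact ⟨h1, by simpa [h1] using hlow (Ring.inverse T w)⟩

/-- (Paper's Proposition 3.8.) Boundedness of the total movement of
the inexact modified alternating projection iterates, and confinement of the iterates
to `X ∩ B̄(x;δ)`. Here `J y` is the Jacobian of `c` at `y` (so `∇c(y)` of the paper is
its adjoint), `QQ y` is the projective mapping, `G y = ∇c(y)ᵀQ(y)∇c(y) + τ(‖c(y)‖)I`,
`d y = ∇c(y) (G y)⁻¹ c(y)` and `A y = y - Q(y) d(y)` is the constraint dissolving step. -/
theorem stmt8 {n p : ℕ}
    (X : Set (EuclideanSpace ℝ (Fin n))) (hXne : X.Nonempty) (hXcl : IsClosed X)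
    (c : EuclideanSpace ℝ (Fin n) → EuclideanSpace ℝ (Fin p))
    (J : EuclideanSpace ℝ (Fin n) → (EuclideanSpace ℝ (Fin n) →L[ℝ] EuclideanSpace ℝ (Fin p)))
    (hderiv : ∀ y, HasFDerivAt c (J y) y) (hJcont : Continuous J)
    (x : EuclideanSpace ℝ (Fin n)) (hxX : x ∈ X) (hcx : c x = 0)
    (QQ : EuclideanSpace ℝ (Fin n) → (EuclideanSpace ℝ (Fin n) →L[ℝ] EuclideanSpace ℝ (Fin n)))
    (τ : ℝ → ℝ) (L_τ : ℝ) (hτ0 : ∀ s, 0 ≤ s → 0 ≤ τ s)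
    (hτL : ∀ s ∈ Set.Icc (0 : ℝ) 1, τ s ≤ L_τ * s)
    (G : EuclideanSpace ℝ (Fin n) →
      (EuclideanSpace ℝ (Fin p) →L[ℝ] EuclideanSpace ℝ (Fin p)))
    (hG : ∀ y, G y = (J y).comp ((QQ y).comp (ContinuousLinearMap.adjoint (J y))) +
      τ ‖c y‖ • (1 : EuclideanSpace ℝ (Fin p) →L[ℝ] EuclideanSpace ℝ (Fin p)))
    (d A : EuclideanSpace ℝ (Fin n) → EuclideanSpace ℝ (Fin n))
    (hd : ∀ y, d y = (ContinuousLinearMap.adjoint (J y)) (Ring.inverse (G y) (c y)))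
    (hA : ∀ y, A y = y - (QQ y) (d y))
    (γ M_c M_Q M_ξ L_c L_ρ σ_Q σ_c : ℝ)
    (hγ0 : 0 < γ) (hγ1 : γ ≤ 1)
    (hMc : 0 < M_c) (hMQ : 0 < M_Q) (hMξ : 0 < M_ξ) (hLc : 0 < L_c) (hLρ : 0 < L_ρ)
    (hσQ : 0 < σ_Q) (hσc : 0 < σ_c)
    (hQsa : ∀ y ∈ closedBall x γ, IsSelfAdjoint (QQ y))
    (hQpsd : ∀ y ∈ closedBall x γ, ∀ v : EuclideanSpace ℝ (Fin n), 0 ≤ ⟪v, QQ y v⟫)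
    (hJb : ∀ y ∈ closedBall x γ, ‖J y‖ ≤ M_c)
    (hQb : ∀ y ∈ closedBall x γ, ‖QQ y‖ ≤ M_Q)
    (hJLip : ∀ y ∈ closedBall x γ, ∀ z ∈ closedBall x γ, ‖J y - J z‖ ≤ L_c * ‖y - z‖)
    (hcoer : ∀ y ∈ closedBall x γ, ∀ v : EuclideanSpace ℝ (Fin p),
      σ_Q / 2 * ‖v‖ ^ 2 ≤ ⟪v, (J y) ((QQ y) ((ContinuousLinearMap.adjoint (J y)) v))⟫)
    (hσmin : ∀ v : EuclideanSpace ℝ (Fin p),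
      σ_c * ‖v‖ ≤ ‖(ContinuousLinearMap.adjoint (J x)) v‖)
    (hgrowth : ∀ y ∈ X ∩ closedBall x γ, ∀ v : EuclideanSpace ℝ (Fin n), ‖v‖ ≤ 1 →
      infDist (y + (QQ y) v) X ≤ L_ρ * ‖v‖ ^ 2)
    (δ δ' : ℝ) (hδ0 : 0 < δ)
    (hδ1 : δ ≤ γ / 2) (hδ2 : δ ≤ 1 / M_c) (hδ3 : δ ≤ σ_c / (6 * L_c))
    (hδ4 : δ ≤ σ_Q / (2 * M_c ^ 2))
    (hδ5 : δ ≤ γ * σ_Q / (σ_Q + 4 * M_Q * M_c ^ 2))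
    (hδ6 : δ ≤ M_Q * σ_Q / (4 * L_ρ * M_c ^ 2 + M_ξ * σ_Q ^ 2))
    (hδ7 : δ ≤ σ_Q ^ 2 / (2 * M_c * (12 * L_ρ * M_c ^ 3 + 2 * L_τ * σ_Q
      + 2 * L_c * M_Q ^ 2 * M_c ^ 2 + 2 * σ_Q ^ 2 * M_c * M_ξ)))
    (hδ' : δ' = σ_Q * δ / (32 * M_Q * M_c ^ 2 + 2 * σ_Q))
    (xs rr : ℕ → EuclideanSpace ℝ (Fin n))
    (hx0 : xs 0 ∈ X ∩ closedBall x δ')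
    (hstep : ∀ k, xs (k + 1) ∈ X ∧
      ‖(A (xs k) + rr k) - xs (k + 1)‖ = infDist (A (xs k) + rr k) X)
    (hrr : ∀ k, ‖rr k‖ ≤ M_ξ * ‖c (xs k)‖ ^ 2) :
    ∀ k : ℕ,
      (∑ i ∈ Finset.range (k + 1), ‖xs (i + 1) - xs i‖) ≤
        8 * M_Q * M_c ^ 2 / σ_Q * infDist (xs 0) {y | c y = 0} ∧
      xs k ∈ X ∩ closedBall x δ := by
  have hLτ : 0 ≤ L_τ := by
    have h1 := hτL 1 ⟨zero_le_one, le_rfl⟩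
    have h2 := hτ0 1 zero_le_one
    linarith
  have hcLip : ∀ y ∈ closedBall x γ, ∀ z ∈ closedBall x γ, ‖c y - c z‖ ≤ M_c * ‖y - z‖ :=
    fun y hy z hz => (convex_closedBall x γ).norm_image_sub_le_of_norm_hasFDerivWithin_le
      (fun w _ => (hderiv w).hasFDerivWithinAt) hJb hz hy
  have hxγ : x ∈ closedBall x γ := mem_closedBall_self hγ0.le
  rw [le_div_iff₀ (by positivity)] at hδ2 hδ4 hδ5 hδ6 hδ7
  -- One step from a point `y` of `X` near `x`: its length, and the halving of the residual.
  have step : ∀ y ∈ X ∩ closedBall x δ, ∀ r y' : EuclideanSpace ℝ (Fin n),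
      ‖(A y + r) - y'‖ = infDist (A y + r) X → ‖r‖ ≤ M_ξ * ‖c y‖ ^ 2 →
      ‖y' - y‖ ≤ 4 * M_Q * M_c / σ_Q * ‖c y‖ ∧ ‖c y'‖ ≤ ‖c y‖ / 2 := by
    rintro y ⟨hyX, hyδ⟩ r y' hproj hr
    rw [mem_closedBall, dist_eq_norm] at hyδ
    have hyγ : y ∈ closedBall x γ := by rw [mem_closedBall, dist_eq_norm]; linarith
    have hC0 : 0 ≤ ‖c y‖ := norm_nonneg _
    have hCδ : ‖c y‖ ≤ M_c * δ := by
      have h := hcLip y hyγ x hxγ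
      rw [hcx, sub_zero] at h
      exact h.trans (by gcongr)
    have hC1 : ‖c y‖ ≤ 1 := by linarith
    have hτy : 0 ≤ τ ‖c y‖ := hτ0 _ hC0
    obtain ⟨hGu, hub⟩ := norm_inverse_apply_le (T := G y) (half_pos hσQ) (fun v => by
      rw [hG]
      have h1 := hcoer y hyγ v
      simp only [add_apply, ContinuousLinearMap.comp_apply, smul_apply,
        one_apply_eq_self, inner_add_right, inner_smul_right,
        real_inner_self_eq_norm_sq]
      have : 0 ≤ τ ‖c y‖ * ‖v‖ ^ 2 := by positivity
      linarith) (c y)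
    set u := Ring.inverse (G y) (c y) with hu
    have hub' : ‖u‖ ≤ 2 / σ_Q * ‖c y‖ := by
      rw [div_mul_eq_mul_div, le_div_iff₀ hσQ]; linarith
    have hdb : ‖d y‖ ≤ 2 * M_c / σ_Q * ‖c y‖ := by
      rw [hd]
      calc _ ≤ ‖ContinuousLinearMap.adjoint (J y)‖ * ‖u‖ := ContinuousLinearMap.le_opNorm _ _
        _ ≤ M_c * (2 / σ_Q * ‖c y‖) := by
          rw [LinearIsometryEquiv.norm_map]
          exact mul_le_mul (hJb y hyγ) hub' (norm_nonneg _) hMc.le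
        _ = _ := by ring
    have hd1 : ‖d y‖ ≤ 1 := by
      refine hdb.trans ?_
      rw [div_mul_eq_mul_div, div_le_one hσQ]
      calc 2 * M_c * ‖c y‖ ≤ 2 * M_c * (M_c * δ) := by gcongr
        _ ≤ σ_Q := by linarith
    have hstepA : ‖A y - y‖ ≤ 2 * M_Q * M_c / σ_Q * ‖c y‖ := by
      rw [hA, sub_sub_cancel_left, norm_neg]
      calc _ ≤ ‖QQ y‖ * ‖d y‖ := ContinuousLinearMap.le_opNorm _ _
        _ ≤ M_Q * (2 * M_c / σ_Q * ‖c y‖) := mul_le_mul (hQb y hyγ) hdb (norm_nonneg _) hMQ.le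
        _ = _ := by ring
    have hdistA : infDist (A y) X ≤ L_ρ * (2 * M_c / σ_Q * ‖c y‖) ^ 2 := by
      have h := hgrowth y ⟨hyX, hyγ⟩ (-d y) (by rwa [norm_neg])
      rw [map_neg, ← sub_eq_add_neg, ← hA, norm_neg] at h
      exact h.trans (by gcongr)
    have hproj' : ‖A y - y'‖ ≤ (4 * L_ρ * M_c ^ 2 / σ_Q ^ 2 + 2 * M_ξ) * ‖c y‖ ^ 2 := by
      have h1 : infDist (A y + r) X ≤ infDist (A y) X + ‖r‖ := by
        have := infDist_le_infDist_add_dist (s := X) (x := A y + r) (y := A y)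
        rwa [dist_eq_norm, add_sub_cancel_left] at this
      have h2 : ‖A y - y'‖ ≤ ‖(A y + r) - y'‖ + ‖r‖ := by
        rw [show A y - y' = ((A y + r) - y') - r by abel]
        exact norm_sub_le _ _
      calc _ ≤ L_ρ * (2 * M_c / σ_Q * ‖c y‖) ^ 2 + 2 * (M_ξ * ‖c y‖ ^ 2) := by linarith
        _ = _ := by ring
    have hproj'' : ‖A y - y'‖ ≤ 2 * M_Q * M_c / σ_Q * ‖c y‖ := by
      refine hproj'.trans ?_
      rw [pow_two ‖c y‖, ← mul_assoc]
      refine mul_le_mul_of_nonneg_right ?_ hC0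
      have h6 : (4 * L_ρ * M_c ^ 2 + 2 * M_ξ * σ_Q ^ 2) * ‖c y‖ ≤ 2 * M_Q * M_c * σ_Q := by
        calc _ ≤ (4 * L_ρ * M_c ^ 2 + 2 * M_ξ * σ_Q ^ 2) * (M_c * δ) := by gcongr
          _ ≤ 2 * M_c * (δ * (4 * L_ρ * M_c ^ 2 + M_ξ * σ_Q ^ 2)) := by
            have : 0 ≤ M_c * δ * (4 * L_ρ * M_c ^ 2) := by positivity
            linarith
          _ ≤ 2 * M_c * (M_Q * σ_Q) := by gcongr
          _ = _ := by ring
      rw [le_div_iff₀ hσQ]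
      refine le_of_mul_le_mul_right ?_ hσQ
      calc _ = (4 * L_ρ * M_c ^ 2 + 2 * M_ξ * σ_Q ^ 2) * ‖c y‖ := by field_simp
        _ ≤ _ := h6
    have hlen : ‖y' - y‖ ≤ 4 * M_Q * M_c / σ_Q * ‖c y‖ := by
      have h1 := norm_sub_le_norm_sub_add_norm_sub y' (A y) y
      rw [norm_sub_rev y' (A y)] at h1
      have h2 : 4 * M_Q * M_c / σ_Q * ‖c y‖
        = 2 * M_Q * M_c / σ_Q * ‖c y‖ + 2 * M_Q * M_c / σ_Q * ‖c y‖ := by ring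
      linarith
    -- Both `A y` and `y'` are within `4 M_Q M_c ‖c y‖ / σ_Q` of `y`, hence in the `γ`-ball.
    have hball : ∀ z, ‖z - y‖ ≤ 4 * M_Q * M_c / σ_Q * ‖c y‖ → z ∈ closedBall x γ := by
      intro z hz
      rw [mem_closedBall, dist_eq_norm]
      have h1 := norm_sub_le_norm_sub_add_norm_sub z y x
      have h2 : 4 * M_Q * M_c / σ_Q * ‖c y‖ ≤ 4 * M_Q * M_c / σ_Q * (M_c * δ) := by gcongr
      have h3 : 4 * M_Q * M_c / σ_Q * (M_c * δ) + δ ≤ γ := by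
        refine le_of_mul_le_mul_right ?_ hσQ
        calc _ = δ * (σ_Q + 4 * M_Q * M_c ^ 2) := by field_simp; ring
          _ ≤ _ := hδ5
      linarith
    have hAγ : A y ∈ closedBall x γ := hball _ (hstepA.trans (by gcongr; norm_num))
    have hy'γ : y' ∈ closedBall x γ := hball _ hlen
    refine ⟨hlen, ?_⟩
    have hlin : c y + J y (A y - y) = τ ‖c y‖ • u := by
      have h1 : A y - y = -(QQ y) (ContinuousLinearMap.adjoint (J y) u) := by
        rw [hA, hd, sub_sub_cancel_left]
      rw [hG] at hGu
      simp only [add_apply, ContinuousLinearMap.comp_apply, smul_apply,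
        one_apply_eq_self] at hGu
      rw [h1, map_neg]
      nth_rewrite 1 [← hGu]
      abel
    have hlinb : ‖c y + J y (A y - y)‖ ≤ 2 * L_τ / σ_Q * ‖c y‖ ^ 2 := by
      rw [hlin, norm_smul, Real.norm_of_nonneg hτy]
      calc _ ≤ (L_τ * ‖c y‖) * (2 / σ_Q * ‖c y‖) :=
            mul_le_mul (hτL _ ⟨hC0, hC1⟩) hub' (norm_nonneg _) (by positivity)
        _ = _ := by ring
    have htay : ‖c (A y) - c y - J y (A y - y)‖
        ≤ 2 * L_c * M_Q ^ 2 * M_c ^ 2 / σ_Q ^ 2 * ‖c y‖ ^ 2 := by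
      have h := norm_taylor_le hderiv (convex_closedBall x γ) hJLip (v := A y - y) hyγ
        (by rwa [add_sub_cancel])
      rw [add_sub_cancel] at h
      calc _ ≤ L_c / 2 * (2 * M_Q * M_c / σ_Q * ‖c y‖) ^ 2 := h.trans (by gcongr)
        _ = _ := by ring
    have hlast : ‖c (A y) - c y'‖
        ≤ M_c * ((4 * L_ρ * M_c ^ 2 / σ_Q ^ 2 + 2 * M_ξ) * ‖c y‖ ^ 2) :=
      (hcLip _ hAγ _ hy'γ).trans (by gcongr)
    have hsplit : ‖c y'‖ ≤ ‖c y + J y (A y - y)‖ + ‖c (A y) - c y - J y (A y - y)‖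
        + ‖c (A y) - c y'‖ := by
      calc ‖c y'‖ = ‖(c y + J y (A y - y)) + (c (A y) - c y - J y (A y - y))
            - (c (A y) - c y')‖ := by congr 1; abel
        _ ≤ _ := (norm_sub_le _ _).trans (by gcongr; exact norm_add_le _ _)
    set B := 4 * L_ρ * M_c ^ 3 + 2 * L_τ * σ_Q + 2 * L_c * M_Q ^ 2 * M_c ^ 2
      + 2 * σ_Q ^ 2 * M_c * M_ξ with hB
    have hBC : 2 * (B * ‖c y‖) ≤ σ_Q ^ 2 := by
      calc 2 * (B * ‖c y‖) ≤ 2 * (B * (M_c * δ)) := by gcongr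
        _ ≤ δ * (2 * M_c * (12 * L_ρ * M_c ^ 3 + 2 * L_τ * σ_Q
            + 2 * L_c * M_Q ^ 2 * M_c ^ 2 + 2 * σ_Q ^ 2 * M_c * M_ξ)) := by
          have : 0 ≤ M_c * δ * (16 * L_ρ * M_c ^ 3) := by positivity
          rw [hB]; linarith
        _ ≤ _ := hδ7
    calc ‖c y'‖ ≤ 2 * L_τ / σ_Q * ‖c y‖ ^ 2
          + 2 * L_c * M_Q ^ 2 * M_c ^ 2 / σ_Q ^ 2 * ‖c y‖ ^ 2
          + M_c * ((4 * L_ρ * M_c ^ 2 / σ_Q ^ 2 + 2 * M_ξ) * ‖c y‖ ^ 2) := by linarith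
      _ = 2 * (B * ‖c y‖) / σ_Q ^ 2 * (‖c y‖ / 2) := by rw [hB]; field_simp; ring
      _ ≤ 1 * (‖c y‖ / 2) := by gcongr; rwa [div_le_one (by positivity)]
      _ = _ := one_mul _
  have hδ'0 : 0 ≤ δ' := by
    rw [hδ']
    positivity
  -- This is where the constant in `δ'` is used: total movement plus initial distance is at most `δ`.
  have hδδ' : 8 * M_Q * M_c / σ_Q * (M_c * δ') + δ' ≤ δ := by
    have h1 : δ' * (32 * M_Q * M_c ^ 2 + 2 * σ_Q) = σ_Q * δ := by
      rw [hδ', div_mul_cancel₀ _ (by positivity)]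
    have h2 : 0 ≤ δ' * (24 * M_Q * M_c ^ 2 + σ_Q) := by positivity
    refine le_of_mul_le_mul_right ?_ hσQ
    calc _ = δ' * (8 * M_Q * M_c ^ 2 + σ_Q) := by field_simp
      _ ≤ _ := by linarith
  have hδ'δ : δ' ≤ δ := by
    have : 0 ≤ 8 * M_Q * M_c / σ_Q * (M_c * δ') := by positivity
    linarith
  have hx0δ : ‖xs 0 - x‖ ≤ δ' := by
    have := hx0.2; rwa [mem_closedBall, dist_eq_norm] at this
  have hc0 : ‖c (xs 0)‖ ≤ M_c * δ' := by
    have h := hcLip (xs 0) (by rw [mem_closedBall, dist_eq_norm]; linarith) x hxγ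
    rw [hcx, sub_zero] at h
    exact h.trans (by gcongr)
  -- Potential argument: movement so far plus a multiple of the current residual does not grow.
  have inv : ∀ k, (∑ i ∈ Finset.range k, ‖xs (i + 1) - xs i‖)
        + 8 * M_Q * M_c / σ_Q * ‖c (xs k)‖ ≤ 8 * M_Q * M_c / σ_Q * ‖c (xs 0)‖ ∧
      xs k ∈ X ∩ closedBall x δ := by
    intro k
    induction k with
    | zero => exact ⟨by simp, hx0.1, closedBall_subset_closedBall hδ'δ hx0.2⟩
    | succ k ih =>
      obtain ⟨hsum, hmem⟩ := ih
      obtain ⟨hlen, hhalf⟩ := step _ hmem _ _ (hstep k).2 (hrr k)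
      have hsum' : (∑ i ∈ Finset.range (k + 1), ‖xs (i + 1) - xs i‖)
          + 8 * M_Q * M_c / σ_Q * ‖c (xs (k + 1))‖ ≤ 8 * M_Q * M_c / σ_Q * ‖c (xs 0)‖ := by
        rw [Finset.sum_range_succ]
        have h1 : 8 * M_Q * M_c / σ_Q * ‖c (xs (k + 1))‖
            ≤ 8 * M_Q * M_c / σ_Q * (‖c (xs k)‖ / 2) := by gcongr
        have h2 : 8 * M_Q * M_c / σ_Q * ‖c (xs k)‖ = 4 * M_Q * M_c / σ_Q * ‖c (xs k)‖
            + 8 * M_Q * M_c / σ_Q * (‖c (xs k)‖ / 2) := by ring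
        linarith
      refine ⟨hsum', (hstep k).1, ?_⟩
      rw [mem_closedBall, dist_eq_norm]
      have h1 : ‖xs (k + 1) - xs 0‖ ≤ ∑ i ∈ Finset.range (k + 1), ‖xs (i + 1) - xs i‖ := by
        have := dist_le_range_sum_dist xs (k + 1)
        simp only [dist_eq_norm] at this
        rw [norm_sub_rev]
        exact this.trans_eq (Finset.sum_congr rfl fun i _ => norm_sub_rev _ _)
      have h2 := norm_sub_le_norm_sub_add_norm_sub (xs (k + 1)) (xs 0) x
      have h3 : 8 * M_Q * M_c / σ_Q * ‖c (xs 0)‖ ≤ 8 * M_Q * M_c / σ_Q * (M_c * δ') := by gcongr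
      have h4 : 0 ≤ 8 * M_Q * M_c / σ_Q * ‖c (xs (k + 1))‖ := by positivity
      linarith
  intro k
  refine ⟨?_, (inv k).2⟩
  have h1 := (inv (k + 1)).1
  have h2 : 0 ≤ 8 * M_Q * M_c / σ_Q * ‖c (xs (k + 1))‖ := by positivity
  have h3 := norm_le_mul_infDist hMc hcx hcLip (hx0δ.trans (hδ'δ.trans hδ1))
  calc _ ≤ 8 * M_Q * M_c / σ_Q * ‖c (xs 0)‖ := by linarith
    _ ≤ 8 * M_Q * M_c / σ_Q * (M_c * infDist (xs 0) {y | c y = 0}) := by gcongr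
    _ = _ := by ring
end

section
/- Under all the hypotheses of the preceding proposition (closed X, C¹ map c with the ball B̄(x;γ) bounds ‖∇c‖ ≤ M_c, ‖Q(·)‖ ≤ M_Q, L_c-Lipschitz ∇c, ⟨v,∇c(y)ᵀQ(y)∇c(y)v⟩ ≥ (σ_Q/2)‖v‖², σ_min(∇c(x)) ≥ σ_c, dist(y + Q(y)v, X) ≤ L_ρ‖v‖² for y ∈ X ∩ B̄(x;γ), ‖v‖ ≤ 1, τ(s) ≤ L_τ s on [0,1], δ satisfying the seven listed inequalities, δ' := σ_Qδ/(32M_QM_c² + 2σ_Q), x₀ ∈ X ∩ B̄(x;δ'), x_{k+1} ∈ Π_X(𝒜(x_k) + r_k) with ‖r_k‖ ≤ M_ξ‖c(x_k)‖²), assume additionally that there is M_T > 0 with dist(y, K) ≤ M_T·dist(y, M) for every y ∈ X ∩ B̄(x;γ), where K := X ∩ M. Then the sequence {x_k} converges to a point x* ∈ K ∩ B̄(x;δ), and for every k, dist(x_{k+1}, K) ≤ (2 M_c² M_T R / σ_c)·dist(x_k, K)², where R := (12L_ρM_c³ + 2L_τσ_Q + 2L_cM_Q²M_c² + 2σ_Q²M_cM_ξ)/σ_Q²;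 that is, {x_k} converges to K quadratically. -/
open Metric
open scoped RealInnerProductSpace

/-!
Write `e k = ‖c (xs k)‖`. The vector `d y` solves a regularised Newton equation for `c`, so it has
size `O(‖c y‖)` because the matrix `G y` is coercive with constant `σ_Q / 2`. The growth condition
on `X` makes the distance of `A y` to `X` of order `‖d y‖ ^ 2`, hence projecting and perturbing
costs only `O(‖c y‖ ^ 2)`. Together with the second-order Taylor estimate
`taylor_bound_of_lipschitz_deriv` this gives, as long as `xs k` is in `B̄(x; δ)`,
`‖xs (k + 1) - xs k‖ ≤ (4 M_Q M_c / σ_Q) e k`, `e (k + 1) ≤ R (e k) ^ 2` and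
`e (k + 1) ≤ e k / 2`.

The quantity `‖xs k - x‖ + (8 M_Q M_c / σ_Q) e k` is therefore nonincreasing, which keeps all
iterates in `B̄(x; δ)`; the steps decay geometrically, so the sequence converges, to a point of
`X` where `c` vanishes.

For the rate, `infDist_zeros_le` bounds the distance to the zero set of `c` by `(2 / σ_c) ‖c‖`. It
requires the correction to be small compared with `δ`, for which `σ_c` alone is not enough: the
coercivity at `x` shows that the smallest singular value of `J x` is also at least
`σ_Q / (2 M_Q M_c)`, and the choice of `δ'` makes `e k` small compared with `δ` times that
number. The error bound turns this into
`dist(xs (k + 1), K) ≤ M_T (2 / σ_c) R (e k) ^ 2`, and `e k ≤ M_c dist(xs k, K)` because a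
nearest point of `K` lies in `B̄(x; γ)`.
-/

section Helpers

variable {E F : Type*} [NormedAddCommGroup E] [InnerProductSpace ℝ E]
  [NormedAddCommGroup F] [InnerProductSpace ℝ F]

/-- First-order Taylor estimate with the sharp constant `L / 2` for a map whose derivative is
`L`-Lipschitz on a convex set. -/
lemma taylor_bound_of_lipschitz_deriv {c : E → F} {J : E → E →L[ℝ] F}
    (hderiv : ∀ y, HasFDerivAt c (J y) y) {S : Set E} (hS : Convex ℝ S) {L : ℝ}
    (hJ : ∀ y ∈ S, ∀ z ∈ S, ‖J y - J z‖ ≤ L * ‖y - z‖)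
    {y z : E} (hy : y ∈ S) (hz : z ∈ S) :
    ‖c z - c y - J y (z - y)‖ ≤ L / 2 * ‖z - y‖ ^ 2 := by
  set h := z - y with hh
  have hline : ∀ t : ℝ, HasDerivAt (fun t : ℝ => y + t • h) h t := fun t => by
    simpa using ((hasDerivAt_id t).smul_const h).const_add y
  have hf : ∀ t : ℝ, HasDerivAt (fun t : ℝ => c (y + t • h) - c y - t • J y h)
      (J (y + t • h) h - J y h) t := fun t => by
    have h1 := (hderiv (y + t • h)).comp_hasDerivAt t (hline t)
    have h2 : HasDerivAt (fun t : ℝ => t • J y h) (J y h) t := by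
      simpa using (hasDerivAt_id t).smul_const (J y h)
    exact (h1.sub_const (c y)).sub h2
  have hB : ∀ t : ℝ, HasDerivAt (fun t : ℝ => L / 2 * ‖h‖ ^ 2 * t ^ 2) (L * ‖h‖ ^ 2 * t) t :=
    fun t => by
      refine ((hasDerivAt_pow 2 t).const_mul (L / 2 * ‖h‖ ^ 2)).congr_deriv ?_
      norm_num
      ring
  have key := image_norm_le_of_norm_deriv_right_le_deriv_boundary (a := (0 : ℝ)) (b := 1)
    (fun t _ => (hf t).continuousAt.continuousWithinAt)
    (fun t _ => (hf t).hasDerivWithinAt) (by simp) hB (fun t ht => by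
      have hmem : y + t • h ∈ S := by
        have := hS.add_smul_sub_mem hy hz ⟨ht.1, ht.2.le⟩
        simpa [hh] using this
      have h1 := hJ _ hmem _ hy
      rw [add_sub_cancel_left, norm_smul, Real.norm_of_nonneg ht.1] at h1
      calc ‖J (y + t • h) h - J y h‖ = ‖(J (y + t • h) - J y) h‖ := by simp
        _ ≤ ‖J (y + t • h) - J y‖ * ‖h‖ := ContinuousLinearMap.le_opNorm _ _
        _ ≤ L * (t * ‖h‖) * ‖h‖ := by gcongr
        _ = L * ‖h‖ ^ 2 * t := by ring)
  have := key (x := 1) ⟨zero_le_one, le_rfl⟩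
  simpa [hh] using this

lemma norm_sub_le_of_deriv_bound {c : E → F} {J : E → E →L[ℝ] F}
    (hderiv : ∀ y, HasFDerivAt c (J y) y) {S : Set E} (hS : Convex ℝ S) {M : ℝ}
    (hJ : ∀ y ∈ S, ‖J y‖ ≤ M) {y z : E} (hy : y ∈ S) (hz : z ∈ S) :
    ‖c z - c y‖ ≤ M * ‖z - y‖ :=
  hS.norm_image_sub_le_of_norm_hasFDerivWithin_le
    (fun w _ => (hderiv w).hasFDerivWithinAt) hJ hy hz

lemma norm_le_of_coercive {T : F →L[ℝ] F} {a : ℝ}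
    (hT : ∀ v, a * ‖v‖ ^ 2 ≤ ⟪v, T v⟫) (v : F) : a * ‖v‖ ≤ ‖T v‖ := by
  rcases eq_or_ne v 0 with rfl | hv
  · simp
  · have h1 := (hT v).trans (real_inner_le_norm v (T v))
    have hv : 0 < ‖v‖ := norm_pos_iff.2 hv
    nlinarith

lemma isUnit_of_coercive_s9 [FiniteDimensional ℝ F] {T : F →L[ℝ] F} {a : ℝ} (ha : 0 < a)
    (hT : ∀ v, a * ‖v‖ ^ 2 ≤ ⟪v, T v⟫) : IsUnit T := by
  have : CompleteSpace F := FiniteDimensional.complete ℝ F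
  have hinj : Function.Injective (T : F →ₗ[ℝ] F) := by
    rw [injective_iff_map_eq_zero]
    intro v hv
    have h1 := norm_le_of_coercive hT v
    have hv' : T v = 0 := hv
    rw [hv', norm_zero] at h1
    exact norm_le_zero_iff.1 (by nlinarith [norm_nonneg v])
  rw [ContinuousLinearMap.isUnit_iff_bijective]
  exact ⟨hinj, LinearMap.injective_iff_surjective.1 hinj⟩

/-- Local metric regularity of `c` at a point where the derivative is quantitatively surjective:
if `J x` has smallest singular value at least `s` and varies by at most `s / 3` on the ball
`B̄(x; r)`, a point `y` has a zero of `c` within `3‖c y‖ / (2s)`, as long as the ball of that radius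
around `y` stays in `B̄(x; r)`. The minimal-norm right inverse `w ↦ Jᵀ(JJᵀ)⁻¹w` of `J x` drives a
Newton iteration with frozen derivative. -/
lemma infDist_zeros_le [CompleteSpace E] [FiniteDimensional ℝ F] [CompleteSpace F]
    {c : E → F} {J : E → E →L[ℝ] F}
    (hderiv : ∀ y, HasFDerivAt c (J y) y) {x y : E} {s r : ℝ} (hs : 0 < s)
    (hsurj : ∀ v, s * ‖v‖ ≤ ‖ContinuousLinearMap.adjoint (J x) v‖)
    (hvar : ∀ z ∈ closedBall x r, ‖J z - J x‖ ≤ s / 3)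
    (hy : 3 / 2 * ‖c y‖ / s + ‖y - x‖ ≤ r) :
    infDist y {z | c z = 0} ≤ 3 / 2 * ‖c y‖ / s := by
  set T : F →L[ℝ] F := (J x).comp (ContinuousLinearMap.adjoint (J x)) with hTdef
  have hTinner : ∀ v, ⟪v, T v⟫ = ‖ContinuousLinearMap.adjoint (J x) v‖ ^ 2 := fun v => by
    rw [hTdef, ContinuousLinearMap.comp_apply, ← ContinuousLinearMap.adjoint_inner_left,
      real_inner_self_eq_norm_sq]
  have hunit : IsUnit T := isUnit_of_coercive_s9 (a := s ^ 2) (by positivity) fun v => by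
    rw [hTinner, ← mul_pow]
    exact pow_le_pow_left₀ (by positivity) (hsurj v) 2
  have hTinv : ∀ w, T (Ring.inverse T w) = w := fun w => by
    have := Ring.mul_inverse_cancel T hunit
    exact congrArg (fun U : F →L[ℝ] F => U w) this
  let P : (J x).NonlinearRightInverse :=
    { toFun := fun w => ContinuousLinearMap.adjoint (J x) (Ring.inverse T w)
      nnnorm := ⟨s⁻¹, by positivity⟩
      bound' := fun w => by
        set u := Ring.inverse T w
        set q := ‖ContinuousLinearMap.adjoint (J x) u‖ with hq
        have h1 : q ^ 2 ≤ ‖u‖ * ‖w‖ := by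
          rw [hq, ← hTinner u, hTinv w]
          exact real_inner_le_norm u w
        have h2 : s * ‖u‖ ≤ q := hsurj u
        have hq0 : 0 ≤ q := norm_nonneg _
        change q ≤ s⁻¹ * ‖w‖
        rw [inv_mul_eq_div, le_div_iff₀ hs]
        rcases hq0.eq_or_lt with h0 | h0
        · rw [← h0]; simp
        · have h3 : s * ‖u‖ * ‖w‖ ≤ q * ‖w‖ := by gcongr
          nlinarith
      right_inv' := fun w => hTinv w }
  have happrox : ApproximatesLinearOn c (J x) (closedBall x r) ⟨s / 3, by positivity⟩ :=
    fun u hu v hv => (convex_closedBall x r).norm_image_sub_le_of_norm_hasFDerivWithin_le'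
      (fun w _ => (hderiv w).hasFDerivWithinAt) hvar hv hu
  have hsub : closedBall y (3 / 2 * ‖c y‖ / s) ⊆ closedBall x r :=
    closedBall_subset_closedBall' (by rwa [dist_eq_norm])
  have hmem : (0 : F) ∈ closedBall (c y)
      (((P.nnnorm : ℝ)⁻¹ - ((⟨s / 3, by positivity⟩ : NNReal) : ℝ)) * (3 / 2 * ‖c y‖ / s)) := by
    have : ((P.nnnorm : ℝ)⁻¹ - ((⟨s / 3, by positivity⟩ : NNReal) : ℝ)) * (3 / 2 * ‖c y‖ / s)
        = ‖c y‖ := by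
      change ((s⁻¹)⁻¹ - s / 3) * (3 / 2 * ‖c y‖ / s) = ‖c y‖
      field_simp
      ring
    rw [this]
    simp
  obtain ⟨z, hz, hcz⟩ := happrox.surjOn_closedBall_of_nonlinearRightInverse P
    (by positivity) hsub hmem
  exact (infDist_le_dist_of_mem (show z ∈ {z | c z = 0} from hcz)).trans
    (by rw [dist_comm]; exact hz)

end Helpers

set_option maxHeartbeats 2000000 in
/-- (Paper's Theorem 3.9.) Local quadratic convergence of the inexact
modified alternating projection method: under the hypotheses of the preceding
proposition and the error bound `dist(y, K) ≤ M_T dist(y, M)` on `X ∩ B̄(x;γ)` with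
`K = X ∩ M`, the iterates converge to a point of `K ∩ B̄(x;δ)` and
`dist(x_{k+1}, K) ≤ (2M_c²M_T R/σ_c) dist(x_k, K)²`. -/
theorem stmt9 {n p : ℕ}
    (X : Set (EuclideanSpace ℝ (Fin n))) (hXne : X.Nonempty) (hXcl : IsClosed X)
    (c : EuclideanSpace ℝ (Fin n) → EuclideanSpace ℝ (Fin p))
    (J : EuclideanSpace ℝ (Fin n) → (EuclideanSpace ℝ (Fin n) →L[ℝ] EuclideanSpace ℝ (Fin p)))
    (hderiv : ∀ y, HasFDerivAt c (J y) y) (hJcont : Continuous J)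
    (x : EuclideanSpace ℝ (Fin n)) (hxX : x ∈ X) (hcx : c x = 0)
    (QQ : EuclideanSpace ℝ (Fin n) → (EuclideanSpace ℝ (Fin n) →L[ℝ] EuclideanSpace ℝ (Fin n)))
    (τ : ℝ → ℝ) (L_τ : ℝ) (hτ0 : ∀ s, 0 ≤ s → 0 ≤ τ s)
    (hτL : ∀ s ∈ Set.Icc (0 : ℝ) 1, τ s ≤ L_τ * s)
    (G : EuclideanSpace ℝ (Fin n) →
      (EuclideanSpace ℝ (Fin p) →L[ℝ] EuclideanSpace ℝ (Fin p)))
    (hG : ∀ y, G y = (J y).comp ((QQ y).comp (ContinuousLinearMap.adjoint (J y))) +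
      τ ‖c y‖ • (1 : EuclideanSpace ℝ (Fin p) →L[ℝ] EuclideanSpace ℝ (Fin p)))
    (d A : EuclideanSpace ℝ (Fin n) → EuclideanSpace ℝ (Fin n))
    (hd : ∀ y, d y = (ContinuousLinearMap.adjoint (J y)) (Ring.inverse (G y) (c y)))
    (hA : ∀ y, A y = y - (QQ y) (d y))
    (γ M_c M_Q M_ξ L_c L_ρ σ_Q σ_c : ℝ)
    (hγ0 : 0 < γ) (hγ1 : γ ≤ 1)
    (hMc : 0 < M_c) (hMQ : 0 < M_Q) (hMξ : 0 < M_ξ) (hLc : 0 < L_c) (hLρ : 0 < L_ρ)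
    (hσQ : 0 < σ_Q) (hσc : 0 < σ_c)
    (hQsa : ∀ y ∈ closedBall x γ, IsSelfAdjoint (QQ y))
    (hQpsd : ∀ y ∈ closedBall x γ, ∀ v : EuclideanSpace ℝ (Fin n), 0 ≤ ⟪v, QQ y v⟫)
    (hJb : ∀ y ∈ closedBall x γ, ‖J y‖ ≤ M_c)
    (hQb : ∀ y ∈ closedBall x γ, ‖QQ y‖ ≤ M_Q)
    (hJLip : ∀ y ∈ closedBall x γ, ∀ z ∈ closedBall x γ, ‖J y - J z‖ ≤ L_c * ‖y - z‖)
    (hcoer : ∀ y ∈ closedBall x γ, ∀ v : EuclideanSpace ℝ (Fin p),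
      σ_Q / 2 * ‖v‖ ^ 2 ≤ ⟪v, (J y) ((QQ y) ((ContinuousLinearMap.adjoint (J y)) v))⟫)
    (hσmin : ∀ v : EuclideanSpace ℝ (Fin p),
      σ_c * ‖v‖ ≤ ‖(ContinuousLinearMap.adjoint (J x)) v‖)
    (hgrowth : ∀ y ∈ X ∩ closedBall x γ, ∀ v : EuclideanSpace ℝ (Fin n), ‖v‖ ≤ 1 →
      infDist (y + (QQ y) v) X ≤ L_ρ * ‖v‖ ^ 2)
    (δ δ' : ℝ) (hδ0 : 0 < δ)
    (hδ1 : δ ≤ γ / 2) (hδ2 : δ ≤ 1 / M_c) (hδ3 : δ ≤ σ_c / (6 * L_c))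
    (hδ4 : δ ≤ σ_Q / (2 * M_c ^ 2))
    (hδ5 : δ ≤ γ * σ_Q / (σ_Q + 4 * M_Q * M_c ^ 2))
    (hδ6 : δ ≤ M_Q * σ_Q / (4 * L_ρ * M_c ^ 2 + M_ξ * σ_Q ^ 2))
    (hδ7 : δ ≤ σ_Q ^ 2 / (2 * M_c * (12 * L_ρ * M_c ^ 3 + 2 * L_τ * σ_Q
      + 2 * L_c * M_Q ^ 2 * M_c ^ 2 + 2 * σ_Q ^ 2 * M_c * M_ξ)))
    (hδ' : δ' = σ_Q * δ / (32 * M_Q * M_c ^ 2 + 2 * σ_Q))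
    (xs rr : ℕ → EuclideanSpace ℝ (Fin n))
    (hx0 : xs 0 ∈ X ∩ closedBall x δ')
    (hstep : ∀ k, xs (k + 1) ∈ X ∧
      ‖(A (xs k) + rr k) - xs (k + 1)‖ = infDist (A (xs k) + rr k) X)
    (hrr : ∀ k, ‖rr k‖ ≤ M_ξ * ‖c (xs k)‖ ^ 2)
    (M_T R : ℝ) (hMT : 0 < M_T)
    (hEB : ∀ y ∈ X ∩ closedBall x γ,
      infDist y (X ∩ {z | c z = 0}) ≤ M_T * infDist y {z | c z = 0})
    (hR : R = (12 * L_ρ * M_c ^ 3 + 2 * L_τ * σ_Q + 2 * L_c * M_Q ^ 2 * M_c ^ 2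
      + 2 * σ_Q ^ 2 * M_c * M_ξ) / σ_Q ^ 2) :
    ∃ xstar ∈ (X ∩ {z | c z = 0}) ∩ closedBall x δ,
      Filter.Tendsto xs Filter.atTop (nhds xstar) ∧
      ∀ k : ℕ, infDist (xs (k + 1)) (X ∩ {z | c z = 0}) ≤
        2 * M_c ^ 2 * M_T * R / σ_c * (infDist (xs k) (X ∩ {z | c z = 0})) ^ 2 := by
  have hLτ : 0 ≤ L_τ := by
    have h1 := hτL 1 ⟨zero_le_one, le_rfl⟩
    have h2 := hτ0 1 zero_le_one
    linarith
  set N := 12 * L_ρ * M_c ^ 3 + 2 * L_τ * σ_Q + 2 * L_c * M_Q ^ 2 * M_c ^ 2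
      + 2 * σ_Q ^ 2 * M_c * M_ξ with hN
  have hN0 : 0 < N := by positivity
  have hR0 : 0 < R := by rw [hR]; positivity
  have hδγ : δ ≤ γ := by linarith
  have hball : ∀ {y}, ‖y - x‖ ≤ δ → y ∈ closedBall x γ := fun h => by
    rw [mem_closedBall, dist_eq_norm]; linarith
  have hconv : Convex ℝ (closedBall x γ) := convex_closedBall x γ
  have hxγ : x ∈ closedBall x γ := mem_closedBall_self hγ0.le
  -- the inequalities on `δ`, with denominators cleared
  have hδ2' : M_c * δ ≤ 1 := by rw [le_div_iff₀ hMc] at hδ2; linarith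
  have hδ3' : 6 * L_c * δ ≤ σ_c := by rw [le_div_iff₀ (by positivity)] at hδ3; linarith
  have hδ4' : 2 * M_c ^ 2 * δ ≤ σ_Q := by rw [le_div_iff₀ (by positivity)] at hδ4; linarith
  have hδ5' : δ + 4 * M_Q * M_c / σ_Q * (M_c * δ) ≤ γ := by
    rw [le_div_iff₀ (by positivity)] at hδ5
    have : δ + 4 * M_Q * M_c / σ_Q * (M_c * δ) = δ * (σ_Q + 4 * M_Q * M_c ^ 2) / σ_Q := by
      field_simp
    rw [this, div_le_iff₀ hσQ]
    exact hδ5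
  have hδ6' : (4 * L_ρ * M_c ^ 2 / σ_Q ^ 2 + M_ξ) * (M_c * δ) ≤ M_Q * M_c / σ_Q := by
    rw [le_div_iff₀ (by positivity)] at hδ6
    have : (4 * L_ρ * M_c ^ 2 / σ_Q ^ 2 + M_ξ) * (M_c * δ)
        = M_c * (δ * (4 * L_ρ * M_c ^ 2 + M_ξ * σ_Q ^ 2)) / σ_Q ^ 2 := by
      field_simp
    rw [this, div_le_div_iff₀ (by positivity) hσQ]
    have := mul_le_mul_of_nonneg_left hδ6 (show 0 ≤ M_c * σ_Q by positivity)
    linarith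
  have hδ7' : R * (M_c * δ) ≤ 1 / 2 := by
    rw [le_div_iff₀ (by positivity)] at hδ7
    rw [hR, div_mul_eq_mul_div, div_le_iff₀ (by positivity)]
    linarith
  have hclip : ∀ {y z}, y ∈ closedBall x γ → z ∈ closedBall x γ → ‖c z - c y‖ ≤ M_c * ‖z - y‖ :=
    fun hy hz => norm_sub_le_of_deriv_bound hderiv hconv hJb hy hz
  have hcle : ∀ {y}, y ∈ closedBall x γ → ‖c y‖ ≤ M_c * ‖y - x‖ := fun hy => by
    simpa [hcx] using hclip hxγ hy
  -- one step of the method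
  have step : ∀ k, xs k ∈ X → ‖xs k - x‖ ≤ δ →
      ‖xs (k + 1) - xs k‖ ≤ 4 * M_Q * M_c / σ_Q * ‖c (xs k)‖ ∧
      ‖c (xs (k + 1))‖ ≤ R * ‖c (xs k)‖ ^ 2 ∧ ‖c (xs (k + 1))‖ ≤ ‖c (xs k)‖ / 2 := by
    intro k hkX hkδ
    obtain ⟨hX1, hproj⟩ := hstep k
    have hr := hrr k
    set y := xs k with hy
    set z := xs (k + 1) with hz
    set e := ‖c y‖ with he
    have he0 : 0 ≤ e := norm_nonneg _
    have hyγ : y ∈ closedBall x γ := hball hkδ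
    have heδ : e ≤ M_c * δ := (hcle hyγ).trans (by gcongr)
    have he1 : e ≤ 1 := heδ.trans hδ2'
    have hτe : 0 ≤ τ e := hτ0 e he0
    have hGapp : ∀ v, G y v
        = J y (QQ y (ContinuousLinearMap.adjoint (J y) v)) + τ e • v := fun v => by
      rw [hG]; simp [he]
    have hGco : ∀ v, σ_Q / 2 * ‖v‖ ^ 2 ≤ ⟪v, G y v⟫ := fun v => by
      rw [hGapp, inner_add_right, real_inner_smul_right, real_inner_self_eq_norm_sq]
      have := hcoer y hyγ v
      have : 0 ≤ τ e * ‖v‖ ^ 2 := by positivity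
      linarith
    have hunit : IsUnit (G y) := isUnit_of_coercive_s9 (by positivity) hGco
    set w := Ring.inverse (G y) (c y) with hw
    have hGw : G y w = c y :=
      congrArg (fun U : EuclideanSpace ℝ (Fin p) →L[ℝ] EuclideanSpace ℝ (Fin p) => U (c y))
        (Ring.mul_inverse_cancel (G y) hunit)
    have hwn : ‖w‖ ≤ 2 / σ_Q * e := by
      have := norm_le_of_coercive hGco w
      rw [hGw] at this
      rw [div_mul_eq_mul_div, le_div_iff₀ hσQ]
      linarith
    have hdy : d y = ContinuousLinearMap.adjoint (J y) w := hd y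
    have hdn : ‖d y‖ ≤ 2 * M_c / σ_Q * e := by
      calc ‖d y‖ ≤ ‖ContinuousLinearMap.adjoint (J y)‖ * ‖w‖ := by
            rw [hdy]; exact ContinuousLinearMap.le_opNorm _ _
        _ ≤ M_c * (2 / σ_Q * e) := by
            rw [LinearIsometryEquiv.norm_map]
            gcongr
            exact hJb y hyγ
        _ = 2 * M_c / σ_Q * e := by ring
    have hd1 : ‖d y‖ ≤ 1 := by
      refine hdn.trans ?_
      rw [div_mul_eq_mul_div, div_le_one hσQ]
      have := mul_le_mul_of_nonneg_left heδ (show 0 ≤ 2 * M_c by positivity)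
      linarith
    have hQd : ‖QQ y (d y)‖ ≤ 2 * M_Q * M_c / σ_Q * e := by
      calc ‖QQ y (d y)‖ ≤ ‖QQ y‖ * ‖d y‖ := ContinuousLinearMap.le_opNorm _ _
        _ ≤ M_Q * (2 * M_c / σ_Q * e) := by
            gcongr
            exact hQb y hyγ
        _ = 2 * M_Q * M_c / σ_Q * e := by ring
    have hAy : A y - y = -QQ y (d y) := by rw [hA]; abel
    have hAX : infDist (A y) X ≤ 4 * L_ρ * M_c ^ 2 / σ_Q ^ 2 * e ^ 2 := by
      have h1 := hgrowth y ⟨hkX, hyγ⟩ (-d y) (by rwa [norm_neg])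
      rw [map_neg, ← sub_eq_add_neg, ← hA, norm_neg] at h1
      refine h1.trans ?_
      calc L_ρ * ‖d y‖ ^ 2 ≤ L_ρ * (2 * M_c / σ_Q * e) ^ 2 := by gcongr
        _ = 4 * L_ρ * M_c ^ 2 / σ_Q ^ 2 * e ^ 2 := by ring
    have hzA : ‖z - A y‖ ≤ (4 * L_ρ * M_c ^ 2 / σ_Q ^ 2 + 2 * M_ξ) * e ^ 2 := by
      have h1 : infDist (A y + rr k) X ≤ infDist (A y) X + dist (A y + rr k) (A y) :=
        infDist_le_infDist_add_dist
      rw [← hproj, dist_eq_norm, add_sub_cancel_left] at h1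
      have h2 : ‖z - A y‖ ≤ ‖rr k‖ + ‖A y + rr k - z‖ := by
        have : z - A y = rr k - (A y + rr k - z) := by abel
        rw [this]
        exact norm_sub_le _ _
      linarith
    have hzA' : ‖z - A y‖ ≤ 2 * M_Q * M_c / σ_Q * e := by
      refine hzA.trans ?_
      have h1 : (4 * L_ρ * M_c ^ 2 / σ_Q ^ 2 + M_ξ) * e ≤ M_Q * M_c / σ_Q :=
        le_trans (by gcongr) hδ6'
      have h2 : 0 ≤ 4 * L_ρ * M_c ^ 2 / σ_Q ^ 2 * e ^ 2 := by positivity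
      have h3 := mul_le_mul_of_nonneg_right h1 he0
      have h4 : 2 * M_Q * M_c / σ_Q * e = 2 * (M_Q * M_c / σ_Q * e) := by ring
      rw [h4]
      linarith
    have hzy : ‖z - y‖ ≤ 4 * M_Q * M_c / σ_Q * e := by
      have h1 : z - y = (z - A y) + (A y - y) := by abel
      have h2 := norm_add_le (z - A y) (A y - y)
      rw [← h1, hAy, norm_neg] at h2
      have h4 : 4 * M_Q * M_c / σ_Q * e
        = 2 * M_Q * M_c / σ_Q * e + 2 * M_Q * M_c / σ_Q * e := by ring
      rw [h4]
      linarith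
    have hbig : 4 * M_Q * M_c / σ_Q * e ≤ 4 * M_Q * M_c / σ_Q * (M_c * δ) := by gcongr
    have hzγ : z ∈ closedBall x γ := by
      rw [mem_closedBall, dist_eq_norm]
      have := norm_sub_le_norm_sub_add_norm_sub z y x
      linarith
    have hAγ : A y ∈ closedBall x γ := by
      rw [mem_closedBall, dist_eq_norm]
      have h1 := norm_sub_le_norm_sub_add_norm_sub (A y) y x
      rw [hAy, norm_neg] at h1
      have h4 : 4 * M_Q * M_c / σ_Q * e
        = 2 * M_Q * M_c / σ_Q * e + 2 * M_Q * M_c / σ_Q * e := by ring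
      have h5 : 0 ≤ 2 * M_Q * M_c / σ_Q * e := by positivity
      linarith
    -- the linearisation of `c` at `y` takes the value `τ e • w` at `A y`
    have hlin : c y + J y (A y - y) = τ e • w := by
      have h1 := hGapp w
      rw [hGw, ← hdy] at h1
      rw [hAy, map_neg, h1]
      abel
    have hτw : ‖τ e • w‖ ≤ 2 * L_τ / σ_Q * e ^ 2 := by
      rw [norm_smul, Real.norm_of_nonneg hτe]
      calc τ e * ‖w‖ ≤ (L_τ * e) * (2 / σ_Q * e) := by
            gcongr
            exact hτL e ⟨he0, he1⟩
        _ = 2 * L_τ / σ_Q * e ^ 2 := by ring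
    have htay : ‖c (A y) - c y - J y (A y - y)‖
        ≤ 2 * L_c * M_Q ^ 2 * M_c ^ 2 / σ_Q ^ 2 * e ^ 2 := by
      refine (taylor_bound_of_lipschitz_deriv hderiv hconv hJLip hyγ hAγ).trans ?_
      rw [hAy, norm_neg]
      calc L_c / 2 * ‖QQ y (d y)‖ ^ 2 ≤ L_c / 2 * (2 * M_Q * M_c / σ_Q * e) ^ 2 := by gcongr
        _ = 2 * L_c * M_Q ^ 2 * M_c ^ 2 / σ_Q ^ 2 * e ^ 2 := by ring
    have hcz : ‖c z‖ ≤ R * e ^ 2 := by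
      have h1 : c z = (c z - c (A y)) + (c (A y) - c y - J y (A y - y)) + τ e • w := by
        rw [← hlin]; abel
      have h2 := norm_add₃_le (a := c z - c (A y)) (b := c (A y) - c y - J y (A y - y))
        (c := τ e • w)
      rw [← h1] at h2
      have h3 := (hclip hAγ hzγ).trans (mul_le_mul_of_nonneg_left hzA hMc.le)
      have h5 : R * e ^ 2 = M_c * ((4 * L_ρ * M_c ^ 2 / σ_Q ^ 2 + 2 * M_ξ) * e ^ 2)
          + 2 * L_c * M_Q ^ 2 * M_c ^ 2 / σ_Q ^ 2 * e ^ 2 + 2 * L_τ / σ_Q * e ^ 2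
          + 8 * L_ρ * M_c ^ 3 / σ_Q ^ 2 * e ^ 2 := by
        rw [hR, hN]; field_simp; ring
      have h6 : 0 ≤ 8 * L_ρ * M_c ^ 3 / σ_Q ^ 2 * e ^ 2 := by positivity
      linarith
    refine ⟨hzy, hcz, hcz.trans ?_⟩
    have h1 : R * e ≤ 1 / 2 := le_trans (by gcongr) hδ7'
    nlinarith
  have hδ'0 : 0 < δ' := by rw [hδ']; positivity
  -- the radius of the initial ball leaves room for the total length of all steps
  have hδ'sum : δ' + 8 * M_Q * M_c / σ_Q * (M_c * δ') ≤ δ := by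
    have : δ' + 8 * M_Q * M_c / σ_Q * (M_c * δ')
        = δ * ((σ_Q + 8 * M_Q * M_c ^ 2) / (32 * M_Q * M_c ^ 2 + 2 * σ_Q)) := by
      rw [hδ']; field_simp
    rw [this]
    refine mul_le_of_le_one_right hδ0.le ?_
    rw [div_le_one (by positivity)]
    have : 0 < M_Q * M_c ^ 2 := by positivity
    linarith
  have hx0n : ‖xs 0 - x‖ ≤ δ' := by simpa [dist_eq_norm] using hx0.2
  have ha0 : 0 < 8 * M_Q * M_c / σ_Q := by positivity
  have hδ'δ : δ' ≤ δ := by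
    have : 0 ≤ 8 * M_Q * M_c / σ_Q * (M_c * δ') := by positivity
    linarith
  have hc0 : ‖c (xs 0)‖ ≤ M_c * δ' :=
    (hcle (hball (hx0n.trans hδ'δ))).trans (by gcongr)
  have hinv : ∀ k, xs k ∈ X ∧ ‖xs k - x‖ + 8 * M_Q * M_c / σ_Q * ‖c (xs k)‖ ≤ δ ∧
      ‖c (xs k)‖ ≤ M_c * δ' * (1 / 2) ^ k := by
    intro k
    induction k with
    | zero =>
      refine ⟨hx0.1, ?_, by simpa using hc0⟩
      have := mul_le_mul_of_nonneg_left hc0 ha0.le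
      linarith
    | succ k ih =>
      obtain ⟨hkX, hpot, hgeo⟩ := ih
      have hpos : 0 ≤ 8 * M_Q * M_c / σ_Q * ‖c (xs k)‖ := by positivity
      obtain ⟨h1, -, h3⟩ := step k hkX (by linarith)
      refine ⟨(hstep k).1, ?_, ?_⟩
      · have h4 := norm_sub_le_norm_sub_add_norm_sub (xs (k + 1)) (xs k) x
        have h5 := mul_le_mul_of_nonneg_left h3 ha0.le
        have h6 : 4 * M_Q * M_c / σ_Q * ‖c (xs k)‖
            = 8 * M_Q * M_c / σ_Q * (‖c (xs k)‖ / 2) := by ring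
        linarith
      · rw [pow_succ]
        linarith
  have hinδ : ∀ k, ‖xs k - x‖ ≤ δ := fun k => by
    have := (hinv k).2.1
    have : 0 ≤ 8 * M_Q * M_c / σ_Q * ‖c (xs k)‖ := by positivity
    linarith
  have hcauchy : CauchySeq xs := by
    refine cauchySeq_of_le_geometric (1 / 2) (4 * M_Q * M_c / σ_Q * (M_c * δ')) (by norm_num) ?_
    intro k
    rw [dist_comm, dist_eq_norm, mul_assoc]
    exact (step k (hinv k).1 (hinδ k)).1.trans
      (mul_le_mul_of_nonneg_left (hinv k).2.2 (by positivity))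
  obtain ⟨xstar, hlim⟩ := cauchySeq_tendsto_of_complete hcauchy
  have hccont : Continuous c := continuous_iff_continuousAt.2 fun y => (hderiv y).continuousAt
  have hKcl : IsClosed (X ∩ {z | c z = 0}) :=
    hXcl.inter (isClosed_eq hccont continuous_const)
  have hc0lim : c xstar = 0 := by
    refine tendsto_nhds_unique ((hccont.tendsto xstar).comp hlim) ?_
    refine squeeze_zero_norm (fun k => (hinv k).2.2) ?_
    simpa using (tendsto_pow_atTop_nhds_zero_of_lt_one (r := (1 / 2 : ℝ))
      (by norm_num) (by norm_num)).const_mul (M_c * δ')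
  refine ⟨xstar, ⟨⟨hXcl.mem_of_tendsto hlim (Filter.Eventually.of_forall fun k => (hinv k).1),
    hc0lim⟩, isClosed_closedBall.mem_of_tendsto hlim (Filter.Eventually.of_forall fun k => by
      rw [mem_closedBall, dist_eq_norm]; exact hinδ k)⟩, hlim, fun k => ?_⟩
  -- both lower bounds on the smallest singular value of `J x` are needed
  set s := max σ_c (σ_Q / (2 * M_Q * M_c)) with hs
  have hs0 : 0 < s := lt_max_of_lt_left hσc
  have hsurj : ∀ v, s * ‖v‖ ≤ ‖ContinuousLinearMap.adjoint (J x) v‖ := by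
    intro v
    rw [hs, max_mul_of_nonneg _ _ (norm_nonneg v)]
    refine max_le (hσmin v) ?_
    rcases eq_or_ne v 0 with rfl | hv
    · simp
    have hv0 : 0 < ‖v‖ := norm_pos_iff.2 hv
    set q := ContinuousLinearMap.adjoint (J x) v
    have h1 : ‖J x (QQ x q)‖ ≤ M_c * (M_Q * ‖q‖) :=
      (ContinuousLinearMap.le_opNorm _ _).trans (mul_le_mul (hJb x hxγ)
        ((ContinuousLinearMap.le_opNorm _ _).trans
          (mul_le_mul_of_nonneg_right (hQb x hxγ) (norm_nonneg _))) (norm_nonneg _) hMc.le)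
    have h2 := (hcoer x hxγ v).trans (real_inner_le_norm v _)
    have h3 : σ_Q / 2 * ‖v‖ ≤ M_c * (M_Q * ‖q‖) := by
      have h4 := h2.trans (mul_le_mul_of_nonneg_left h1 hv0.le)
      refine le_of_mul_le_mul_left ?_ hv0
      linarith
    rw [div_mul_eq_mul_div, div_le_iff₀ (by positivity)]
    linarith
  have hvar : ∀ z ∈ closedBall x (2 * δ), ‖J z - J x‖ ≤ s / 3 := by
    intro z hz
    have hzγ : z ∈ closedBall x γ := closedBall_subset_closedBall (by linarith) hz
    rw [mem_closedBall, dist_eq_norm] at hz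
    have h1 := (hJLip z hzγ x hxγ).trans (mul_le_mul_of_nonneg_left hz hLc.le)
    have h2 : σ_c ≤ s := le_max_left _ _
    linarith
  have hsmall : 3 / 2 * ‖c (xs (k + 1))‖ / s ≤ δ := by
    have h1 := (hinv (k + 1)).2.1
    have h2 : σ_Q / (2 * M_Q * M_c) ≤ s := le_max_right _ _
    have h3 := norm_nonneg (xs (k + 1) - x)
    have h4 : ‖c (xs (k + 1))‖ ≤ δ * (σ_Q / (8 * M_Q * M_c)) := by
      rw [← mul_div_assoc, le_div_iff₀ (by positivity)]
      have h5 : 8 * M_Q * M_c / σ_Q * ‖c (xs (k + 1))‖ ≤ δ := by linarith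
      rw [div_mul_eq_mul_div, div_le_iff₀ hσQ] at h5
      linarith
    have h6 : σ_Q / (8 * M_Q * M_c) = σ_Q / (2 * M_Q * M_c) / 4 := by
      field_simp; norm_num
    rw [h6] at h4
    rw [div_le_iff₀ hs0]
    have h7 := mul_le_mul_of_nonneg_left h2 hδ0.le
    have h8 := norm_nonneg (c (xs (k + 1)))
    linarith
  have hreg := infDist_zeros_le hderiv hs0 hsurj hvar (y := xs (k + 1))
    (by linarith [hinδ (k + 1)])
  have hreg' : infDist (xs (k + 1)) {z | c z = 0} ≤ 2 / σ_c * ‖c (xs (k + 1))‖ := by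
    refine hreg.trans ?_
    calc 3 / 2 * ‖c (xs (k + 1))‖ / s ≤ 2 * ‖c (xs (k + 1))‖ / σ_c := by
          gcongr
          · norm_num
          · exact le_max_left _ _
      _ = 2 / σ_c * ‖c (xs (k + 1))‖ := by ring
  have hdist : ‖c (xs k)‖ ≤ M_c * infDist (xs k) (X ∩ {z | c z = 0}) := by
    have hxK : x ∈ X ∩ {z | c z = 0} := ⟨hxX, hcx⟩
    obtain ⟨z, hzK, hz⟩ := hKcl.exists_infDist_eq_dist ⟨x, hxK⟩ (xs k)
    have h1 : dist (xs k) z ≤ δ := by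
      rw [← hz]
      exact (infDist_le_dist_of_mem hxK).trans (by rw [dist_eq_norm]; exact hinδ k)
    have hzγ : z ∈ closedBall x γ := by
      have h2 := dist_triangle_left z x (xs k)
      have h3 : dist (xs k) x ≤ δ := by rw [dist_eq_norm]; exact hinδ k
      rw [mem_closedBall]
      linarith
    have h4 := hclip hzγ (hball (hinδ k))
    rw [show c z = 0 from hzK.2, sub_zero, ← dist_eq_norm, ← hz] at h4
    exact h4
  calc infDist (xs (k + 1)) (X ∩ {z | c z = 0})
      ≤ M_T * infDist (xs (k + 1)) {z | c z = 0} :=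
        hEB _ ⟨(hinv (k + 1)).1, hball (hinδ (k + 1))⟩
    _ ≤ M_T * (2 / σ_c * (R * (M_c * infDist (xs k) (X ∩ {z | c z = 0})) ^ 2)) := by
        refine mul_le_mul_of_nonneg_left (hreg'.trans ?_) hMT.le
        refine mul_le_mul_of_nonneg_left ?_ (by positivity)
        refine (step k (hinv k).1 (hinδ k)).2.1.trans ?_
        gcongr
    _ = 2 * M_c ^ 2 * M_T * R / σ_c * (infDist (xs k) (X ∩ {z | c z = 0})) ^ 2 := by ring
end

section
/- Let X ⊆ ℝⁿ be nonempty and closed, and let c : ℝⁿ → ℝᵖ be continuously differentiable such that y ↦ ∇c(y)c(y) is Lipschitz continuous on every bounded subset of ℝⁿ. Fix κ ∈ (0,1), η_max > 0 and α ∈ (0,1). Let {x_k} ⊆ X be a sequence such that for every k at least one of the following holds: (a) ‖c(x_{k+1})‖ ≤ (1−κ)‖c(x_k)‖; or (b) x_{k+1} is a nearest point in X to x_k − η_k ∇c(x_k)c(x_k) satisfying ½‖c(x_{k+1})‖² ≤ ½‖c(x_k)‖² − (1/(4η_k))‖x_{k+1} − x_k‖², where η_k = α^{j_k} η_max and j_k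 is the smallest nonnegative integer j for which some nearest point x₊ in X to x_k − α^{j}η_max ∇c(x_k)c(x_k) satisfies ½‖c(x₊)‖² ≤ ½‖c(x_k)‖² − (1/(4α^{j}η_max))‖x₊ − x_k‖². Then every cluster point x* of {x_k} lies in X and there exists η > 0 such that x* is a nearest point in X to x* − η ∇c(x*)c(x*); consequently −∇c(x*)c(x*) is a proximal normal to X at x*, i.e., 0 ∈ ∇c(x*)c(x*) + N_X(x*). -/
open Metric

/-!
Write `f = ½‖c‖²` and `g = ∇f`. Both kinds of step make `f (xs k)` nonincreasing, so `f (xs k)`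
converges, and its limit is `f x*`. If `c x* = 0` then `g x* = 0` and there is nothing to prove.
Otherwise `‖c (xs k)‖` has a positive limit, so steps of type (a) stop occurring.

Near `x*` all trial points stay in one ball, on which `g` is `L`-Lipschitz. The descent lemma
`descent_of_lipschitz` and the projection inequality show that every step size `≤ 1/(2L)` passes the
sufficient decrease test (`decrease_of_small_step`), so the accepted step sizes near `x*` are bounded
below by some `m > 0`. Sufficient decrease forces `‖xs (k+1) - xs k‖ → 0`. The optimality of the
projection then gives, for every `w ∈ X`, in the limit along a subsequence,
`0 ≤ ‖w - x*‖² / (2m) + ⟪g x*, w - x*⟫`, which says that `x*` is a nearest point of `X` to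
`x* - m • g x*`.
-/

/-- The descent lemma for a function whose gradient `g` is Lipschitz on a convex set. -/
lemma descent_of_lipschitz {E : Type*} [NormedAddCommGroup E] [InnerProductSpace ℝ E]
    {f : E → ℝ} {g : E → E} (hf : ∀ y, HasFDerivAt f (innerSL ℝ (g y)) y)
    {s : Set E} (hs : Convex ℝ s) {L : ℝ}
    (hL : ∀ y ∈ s, ∀ z ∈ s, ‖g y - g z‖ ≤ L * ‖y - z‖) {x y : E} (hx : x ∈ s) (hy : y ∈ s) :
    f y ≤ f x + inner ℝ (g x) (y - x) + L / 2 * ‖y - x‖ ^ 2 := by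
  set d := y - x with hd
  let φ : ℝ → ℝ := fun t => f (x + t • d) - t * inner ℝ (g x) d - L / 2 * ‖d‖ ^ 2 * t ^ 2
  have hφ : ∀ t, HasDerivAt φ
      (inner ℝ (g (x + t • d)) d - inner ℝ (g x) d - L / 2 * ‖d‖ ^ 2 * (2 * t)) t := by
    intro t
    have h1 : HasDerivAt (fun t : ℝ => x + t • d) d t := by
      simpa using ((hasDerivAt_id t).smul_const d).const_add x
    have h2 := (hf (x + t • d)).comp_hasDerivAt t h1
    have h3 := (hasDerivAt_id t).mul_const (inner ℝ (g x) d)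
    have h4 := (hasDerivAt_pow 2 t).const_mul (L / 2 * ‖d‖ ^ 2)
    have h5 := (h2.sub h3).sub h4
    refine (h5.congr_deriv ?_)
    simp
  have hanti : AntitoneOn φ (Set.Icc 0 1) := by
    apply antitoneOn_of_deriv_nonpos (convex_Icc 0 1)
    · exact fun t _ => (hφ t).continuousAt.continuousWithinAt
    · exact fun t _ => (hφ t).differentiableAt.differentiableWithinAt
    · intro t ht
      rw [interior_Icc] at ht
      rw [(hφ t).deriv, ← inner_sub_left]
      have hmem : x + t • d ∈ s := hs.add_smul_sub_mem hx hy ⟨ht.1.le, ht.2.le⟩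
      have h1 := hL _ hmem _ hx
      have h2 := real_inner_le_norm (g (x + t • d) - g x) d
      have h3 : ‖x + t • d - x‖ = t * ‖d‖ := by
        rw [add_sub_cancel_left, norm_smul, Real.norm_of_nonneg ht.1.le]
      rw [h3] at h1
      have h4 := mul_le_mul_of_nonneg_right h1 (norm_nonneg d)
      nlinarith
  have h01 := hanti (Set.left_mem_Icc.2 zero_le_one) (Set.right_mem_Icc.2 zero_le_one) zero_le_one
  have hxy : x + d = y := by rw [hd]; abel
  simp only [φ, one_smul, zero_smul, add_zero, hxy] at h01
  linarith

/-- Expanding the squares: the condition that `u` is at least as close as `w` to `x - t • v`. -/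
lemma proj_expand {E : Type*} [NormedAddCommGroup E] [InnerProductSpace ℝ E] (x v u w : E) (t : ℝ) :
    ‖(x - t • v) - u‖ ≤ ‖(x - t • v) - w‖ ↔
      ‖u - x‖ ^ 2 + 2 * t * inner ℝ v (u - x) ≤ ‖w - x‖ ^ 2 + 2 * t * inner ℝ v (w - x) := by
  have key : ∀ z : E, ‖(x - t • v) - z‖ ^ 2 =
      ‖z - x‖ ^ 2 + 2 * t * inner ℝ v (z - x) + ‖t • v‖ ^ 2 := by
    intro z
    have : (x - t • v) - z = -((z - x) + t • v) := by abel
    rw [this, norm_neg, norm_add_sq_real, inner_smul_right, real_inner_comm]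
    ring
  rw [← sq_le_sq₀ (norm_nonneg _) (norm_nonneg _), key, key]
  constructor <;> intro h <;> linarith

/-- A nearest point to the gradient-step point passes the sufficient decrease test as soon as
the step size `t` satisfies `t ≤ 1/(2L)`. -/
lemma decrease_of_small_step {E : Type*} [NormedAddCommGroup E] [InnerProductSpace ℝ E]
    {f : E → ℝ} {g : E → E} {x u : E} {L t : ℝ} (ht : 0 < t) (htL : 2 * L * t ≤ 1)
    (hdesc : f u ≤ f x + inner ℝ (g x) (u - x) + L / 2 * ‖u - x‖ ^ 2)
    (hnear : ‖(x - t • g x) - u‖ ≤ ‖(x - t • g x) - x‖) :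
    f u ≤ f x - 1 / (4 * t) * ‖u - x‖ ^ 2 := by
  rw [proj_expand] at hnear
  simp only [sub_self, norm_zero, inner_zero_right] at hnear
  have h1 : inner ℝ (g x) (u - x) ≤ -(‖u - x‖ ^ 2 / (2 * t)) := by
    rw [← neg_div, le_div_iff₀ (by positivity)]
    linarith
  have h2 : L / 2 ≤ 1 / (4 * t) := by
    rw [le_div_iff₀ (by positivity)]
    linarith
  have h3 := mul_le_mul_of_nonneg_right h2 (sq_nonneg ‖u - x‖)
  have h4 : ‖u - x‖ ^ 2 / (2 * t) = 2 * (1 / (4 * t) * ‖u - x‖ ^ 2) := by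
    field_simp
    norm_num
  linarith

set_option maxHeartbeats 1000000 in
/-- (Paper's Proposition 3.11.) Global convergence of the adaptive
alternating projection method with hybrid projected gradient steps: every cluster
point `x*` of the iterates lies in `X` and is a nearest point of `X` to
`x* - η ∇c(x*)c(x*)` for some `η > 0` (the proximal-normal fixed-point form of
`0 ∈ ∇c(x*)c(x*) + N_X(x*)`). Here `J y` is the Jacobian of `c` at `y`, so that
`∇c(y)c(y) = (J y)ᵀ (c y)`. -/
theorem stmt11 {n p : ℕ}
    (X : Set (EuclideanSpace ℝ (Fin n))) (hXne : X.Nonempty) (hXcl : IsClosed X)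
    (c : EuclideanSpace ℝ (Fin n) → EuclideanSpace ℝ (Fin p))
    (J : EuclideanSpace ℝ (Fin n) → (EuclideanSpace ℝ (Fin n) →L[ℝ] EuclideanSpace ℝ (Fin p)))
    (hderiv : ∀ y, HasFDerivAt c (J y) y) (hJcont : Continuous J)
    (hLipBdd : ∀ s : Set (EuclideanSpace ℝ (Fin n)), Bornology.IsBounded s →
      ∃ L : ℝ, ∀ y ∈ s, ∀ z ∈ s,
        ‖(ContinuousLinearMap.adjoint (J y)) (c y) -
          (ContinuousLinearMap.adjoint (J z)) (c z)‖ ≤ L * ‖y - z‖)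
    (κ ηmax α : ℝ) (hκ0 : 0 < κ) (hκ1 : κ < 1) (hηmax : 0 < ηmax)
    (hα0 : 0 < α) (hα1 : α < 1)
    (xs : ℕ → EuclideanSpace ℝ (Fin n)) (hxsX : ∀ k, xs k ∈ X)
    (hstep : ∀ k : ℕ,
      (‖c (xs (k + 1))‖ ≤ (1 - κ) * ‖c (xs k)‖) ∨
      (∃ j : ℕ,
        (∀ j' < j, ¬ ∃ xplus ∈ X,
          ‖(xs k - (α ^ j' * ηmax) • (ContinuousLinearMap.adjoint (J (xs k))) (c (xs k)))
              - xplus‖ =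
            infDist (xs k - (α ^ j' * ηmax) •
              (ContinuousLinearMap.adjoint (J (xs k))) (c (xs k))) X ∧
          (1 / 2) * ‖c xplus‖ ^ 2 ≤
            (1 / 2) * ‖c (xs k)‖ ^ 2 - (1 / (4 * (α ^ j' * ηmax))) * ‖xplus - xs k‖ ^ 2) ∧
        ‖(xs k - (α ^ j * ηmax) • (ContinuousLinearMap.adjoint (J (xs k))) (c (xs k)))
            - xs (k + 1)‖ =
          infDist (xs k - (α ^ j * ηmax) •
            (ContinuousLinearMap.adjoint (J (xs k))) (c (xs k))) X ∧
        (1 / 2) * ‖c (xs (k + 1))‖ ^ 2 ≤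
          (1 / 2) * ‖c (xs k)‖ ^ 2 - (1 / (4 * (α ^ j * ηmax))) * ‖xs (k + 1) - xs k‖ ^ 2)) :
    ∀ xstar : EuclideanSpace ℝ (Fin n), MapClusterPt xstar Filter.atTop xs →
      xstar ∈ X ∧ ∃ η : ℝ, 0 < η ∧
        ‖(xstar - η • (ContinuousLinearMap.adjoint (J xstar)) (c xstar)) - xstar‖ =
          infDist (xstar - η • (ContinuousLinearMap.adjoint (J xstar)) (c xstar)) X := by
  intro xstar hclus
  obtain ⟨ψ, hψ, hlim⟩ := hclus.tendsto_subseq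
  have hxX : xstar ∈ X := hXcl.mem_of_tendsto hlim (Filter.Eventually.of_forall fun k => hxsX _)
  refine ⟨hxX, ?_⟩
  have hcc : Continuous c := continuous_iff_continuousAt.2 fun y => (hderiv y).continuousAt
  set g : EuclideanSpace ℝ (Fin n) → EuclideanSpace ℝ (Fin n) :=
    fun y => (ContinuousLinearMap.adjoint (J y)) (c y) with hg
  have hgc : Continuous g :=
    ((ContinuousLinearMap.adjoint (𝕜 := ℝ)).continuous.comp hJcont).clm_apply hcc
  let f : EuclideanSpace ℝ (Fin n) → ℝ := fun y => (1 / 2) * ‖c y‖ ^ 2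
  have hfd : ∀ y, HasFDerivAt f (innerSL ℝ (g y)) y := by
    intro y
    have h := ((hderiv y).norm_sq).const_mul (1 / 2 : ℝ)
    refine h.congr_fderiv ?_
    ext v
    simp [hg, ContinuousLinearMap.adjoint_inner_left]
  have hfc : Continuous f := by fun_prop
  change ∃ η : ℝ, 0 < η ∧ ‖(xstar - η • g xstar) - xstar‖ = infDist (xstar - η • g xstar) X
  by_cases hc0 : c xstar = 0
  · have hg0 : g xstar = 0 := by simp [hg, hc0]
    exact ⟨1, one_pos, by simp [hg0, infDist_zero_of_mem hxX]⟩
  have hηpos : ∀ j : ℕ, 0 < α ^ j * ηmax := fun j => by positivity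
  have hanti : Antitone (fun k => f (xs k)) := by
    refine antitone_nat_of_succ_le fun k => ?_
    rcases hstep k with h | ⟨j, -, -, h⟩
    · have h1 : ‖c (xs (k + 1))‖ ≤ ‖c (xs k)‖ := by nlinarith [norm_nonneg (c (xs k))]
      have h2 : ‖c (xs (k + 1))‖ ^ 2 ≤ ‖c (xs k)‖ ^ 2 := by gcongr
      simp only [f]
      linarith
    · have : 0 ≤ 1 / (4 * (α ^ j * ηmax)) * ‖xs (k + 1) - xs k‖ ^ 2 := by
        have := hηpos j
        positivity
      simp only [f]
      linarith
  have hfsub : Filter.Tendsto (fun k => f (xs (ψ k))) Filter.atTop (nhds (f xstar)) :=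
    (hfc.tendsto xstar).comp hlim
  have hflim : Filter.Tendsto (fun k => f (xs k)) Filter.atTop (nhds (f xstar)) := by
    have h := tendsto_atTop_ciInf hanti ⟨0, by rintro _ ⟨k, rfl⟩; simp only [f]; positivity⟩
    rwa [tendsto_nhds_unique (h.comp hψ.tendsto_atTop) hfsub] at h
  -- The next iterate `xs (ψ k + 1)` need not be controlled in position, but its value of `f` is.
  have hfsub1 : Filter.Tendsto (fun k => f (xs (ψ k + 1))) Filter.atTop (nhds (f xstar)) :=
    (hflim.comp (Filter.tendsto_add_atTop_nat 1)).comp hψ.tendsto_atTop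
  have hfpos : 0 < f xstar := by
    have := norm_pos_iff.2 hc0
    simp only [f]
    positivity
  have hnota : ∀ᶠ k in Filter.atTop, ¬ ‖c (xs (ψ k + 1))‖ ≤ (1 - κ) * ‖c (xs (ψ k))‖ := by
    have h1 : (1 - κ) ^ 2 * f xstar < f xstar :=
      mul_lt_of_lt_one_left hfpos (pow_lt_one₀ (by linarith) (by linarith) two_ne_zero)
    filter_upwards [(hfsub.const_mul ((1 - κ) ^ 2)).eventually_lt hfsub1 h1] with k hk hle
    have h2 : ‖c (xs (ψ k + 1))‖ ^ 2 ≤ ((1 - κ) * ‖c (xs (ψ k))‖) ^ 2 := by gcongr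
    simp only [f] at hk
    nlinarith
  set G := ‖g xstar‖ + 1 with hG
  have hgsub : Filter.Tendsto (fun k => g (xs (ψ k))) Filter.atTop (nhds (g xstar)) :=
    (hgc.tendsto xstar).comp hlim
  have hgbd : ∀ᶠ k in Filter.atTop, ‖g (xs (ψ k))‖ < G :=
    hgsub.norm.eventually_lt_const (by simp [hG])
  have hxbd : ∀ᶠ k in Filter.atTop, dist (xs (ψ k)) xstar < 1 :=
    (Metric.tendsto_nhds.1 hlim) 1 one_pos
  -- A nearest point to `x - t • g x` with `x ∈ X` lies within `2 t ‖g x‖ ≤ 2 ηmax G` of `x`.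
  set B := closedBall xstar (1 + 2 * ηmax * G) with hB
  obtain ⟨L₀, hL₀⟩ := hLipBdd B isBounded_closedBall
  set L := max L₀ 1 with hLdef
  have hLpos : 0 < L := lt_max_of_lt_right one_pos
  have hL : ∀ y ∈ B, ∀ z ∈ B, ‖g y - g z‖ ≤ L * ‖y - z‖ := fun y hy z hz =>
    (hL₀ y hy z hz).trans (by gcongr; exact le_max_left _ _)
  obtain ⟨N, hN⟩ : ∃ N : ℕ, α ^ N < 1 / (2 * L * ηmax) :=
    exists_pow_lt_of_lt_one (by positivity) hα1
  rw [lt_div_iff₀ (by positivity)] at hN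
  set m := α ^ N * ηmax with hm
  have hmpos : 0 < m := hηpos N
  have hm1 : m ≤ ηmax := mul_le_of_le_one_left hηmax.le (pow_le_one₀ hα0.le hα1.le)
  have hGpos : 0 < G := by positivity
  have hmain : ∀ w ∈ X, ∀ᶠ k in Filter.atTop,
      0 ≤ ‖w - xs (ψ k)‖ ^ 2 + 2 * m * inner ℝ (g (xs (ψ k))) (w - xs (ψ k)) +
        2 * m * (G * √(4 * ηmax * (f (xs (ψ k)) - f (xs (ψ k + 1))))) := by
    intro w hw
    filter_upwards [hnota, hgbd, hxbd] with k hka hkg hkx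
    obtain ⟨j, hjmin, hjnear, hjdec⟩ := (hstep (ψ k)).resolve_left hka
    set x := xs (ψ k) with hx
    set u := xs (ψ k + 1) with hu
    have hxmem : x ∈ X := hxsX _
    have hjN : j ≤ N := by
      by_contra! hlt
      apply hjmin N hlt
      obtain ⟨y, hyX, hy⟩ := hXcl.exists_infDist_eq_dist hXne (x - m • g x)
      rw [dist_eq_norm] at hy
      refine ⟨y, hyX, hy.symm, ?_⟩
      have hnear : ‖(x - m • g x) - y‖ ≤ ‖(x - m • g x) - x‖ := by
        rw [← hy, ← dist_eq_norm]
        exact infDist_le_dist_of_mem hxmem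
      have hgx : ‖(x - m • g x) - x‖ ≤ ηmax * G := by
        have : (x - m • g x) - x = -(m • g x) := by abel
        rw [this, norm_neg, norm_smul, Real.norm_of_nonneg hmpos.le]
        gcongr
      have hxB : x ∈ B := by
        rw [hB, mem_closedBall]
        nlinarith [mul_pos hηmax hGpos]
      have hyB : y ∈ B := by
        rw [hB, mem_closedBall]
        have h1 := dist_triangle y (x - m • g x) xstar
        have h2 := dist_triangle (x - m • g x) x xstar
        rw [dist_comm y (x - m • g x), dist_eq_norm _ y] at h1
        rw [dist_eq_norm _ x] at h2
        linarith
      have hmL : 2 * L * m ≤ 1 := by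
        rw [hm]
        linarith
      have hdesc := descent_of_lipschitz hfd (convex_closedBall _ _) hL hxB hyB
      exact decrease_of_small_step (f := f) (g := g) hmpos hmL hdesc hnear
    set t := α ^ j * ηmax with ht
    have htpos : 0 < t := hηpos j
    have hmt : m ≤ t :=
      mul_le_mul_of_nonneg_right (pow_le_pow_of_le_one hα0.le hα1.le hjN) hηmax.le
    have htmax : t ≤ ηmax := mul_le_of_le_one_left hηmax.le (pow_le_one₀ hα0.le hα1.le)
    have hd : ‖u - x‖ ≤ √(4 * ηmax * (f x - f u)) := by
      apply Real.le_sqrt_of_sq_le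
      have h1 : 1 / (4 * t) * ‖u - x‖ ^ 2 ≤ f x - f u := by
        simp only [f]
        linarith
      rw [one_div_mul_eq_div, div_le_iff₀ (by positivity)] at h1
      have h2 : 0 ≤ f x - f u := sub_nonneg.2 (hanti (Nat.le_succ (ψ k)))
      nlinarith
    have hopt : ‖(x - t • g x) - u‖ ≤ ‖(x - t • g x) - w‖ := by
      rw [hjnear, ← dist_eq_norm]
      exact infDist_le_dist_of_mem hw
    rw [proj_expand] at hopt
    have hin : -(G * √(4 * ηmax * (f x - f u))) ≤ inner ℝ (g x) (u - x) := by
      have h1 := neg_le_of_abs_le (abs_real_inner_le_norm (g x) (u - x))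
      have h2 : ‖g x‖ * ‖u - x‖ ≤ G * √(4 * ηmax * (f x - f u)) := by gcongr
      linarith
    -- The inequality for the step `t` passes to the smaller step `m`, by cases on the sign of `A`.
    set A := inner ℝ (g x) (w - x) + G * √(4 * ηmax * (f x - f u)) with hA
    have h1 : 0 ≤ ‖w - x‖ ^ 2 + 2 * t * A := by
      nlinarith [sq_nonneg ‖u - x‖, mul_le_mul_of_nonneg_left hin htpos.le]
    have h2 : 0 ≤ ‖w - x‖ ^ 2 + 2 * m * A := by
      rcases le_total 0 A with hA0 | hA0
      · positivity
      · nlinarith [mul_le_mul_of_nonpos_right hmt hA0]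
    rw [hA] at h2
    linarith
  refine ⟨m, hmpos, le_antisymm ?_ (by
    rw [← dist_eq_norm]; exact infDist_le_dist_of_mem hxX)⟩
  refine (le_infDist hXne).2 fun w hw => ?_
  rw [dist_eq_norm, proj_expand]
  have hlimw : Filter.Tendsto (fun k => ‖w - xs (ψ k)‖ ^ 2 +
      2 * m * inner ℝ (g (xs (ψ k))) (w - xs (ψ k)) +
        2 * m * (G * √(4 * ηmax * (f (xs (ψ k)) - f (xs (ψ k + 1)))))) Filter.atTop
      (nhds (‖w - xstar‖ ^ 2 + 2 * m * inner ℝ (g xstar) (w - xstar) +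
        2 * m * (G * √(4 * ηmax * (f xstar - f xstar))))) := by
    have hw' : Filter.Tendsto (fun k => w - xs (ψ k)) Filter.atTop (nhds (w - xstar)) :=
      hlim.const_sub w
    exact ((hw'.norm.pow 2).add ((hgsub.inner hw').const_mul _)).add
      ((((hfsub.sub hfsub1).const_mul _).sqrt.const_mul _).const_mul _)
  have := ge_of_tendsto hlimw (hmain w hw)
  simpa using this
end

section
/- Fix q ∈ (0,1] and an integer n ≥ 1. For every x ∈ ℝⁿ with Σ_{i=1}^{n} |x_i|^q ≤ 1, the matrix Diag(|x₁|^{2−q}, …, |x_n|^{2−q}) − x xᵀ is symmetric positive semidefinite; consequently, the matrix Q(x) := (Diag(|x|^{2−q}) − x xᵀ) + (1 − Σ_i |x_i|^q)·I_n is also symmetric positive semidefinite. -/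
/-!
The quadratic form of `Diag(|x|^{2-q}) - x xᵀ` at `y` is `∑ |x_i|^{2-q} y_i² - (∑ x_i y_i)²`.
Since `x_i² = |x_i|^q |x_i|^{2-q}`, Cauchy–Schwarz bounds the subtracted square by
`(∑ |x_i|^q) (∑ |x_i|^{2-q} y_i²)`, and the first factor is at most `1` on the `ℓ_q` ball.
The second matrix adds a nonnegative multiple of the identity.
-/

/-- For `x` in the `ℓ_q` ball (`0 < q ≤ 1`), the matrix
`Diag(|x|^{2-q}) - x xᵀ` is symmetric positive semidefinite, and consequently so is
the projective mapping `Q(x) = (Diag(|x|^{2-q}) - x xᵀ) + (1 - Σ|x_i|^q) I`. -/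
theorem stmt12 {n : ℕ} (hn : 1 ≤ n) (q : ℝ) (hq0 : 0 < q) (hq1 : q ≤ 1)
    (x : Fin n → ℝ) (hx : ∑ i, |x i| ^ q ≤ 1) :
    (Matrix.diagonal (fun i => |x i| ^ (2 - q)) - Matrix.vecMulVec x x).PosSemidef ∧
    ((Matrix.diagonal (fun i => |x i| ^ (2 - q)) - Matrix.vecMulVec x x)
        + (1 - ∑ i, |x i| ^ q) • (1 : Matrix (Fin n) (Fin n) ℝ)).PosSemidef := by
  have hmain :
      (Matrix.diagonal (fun i => |x i| ^ (2 - q)) - Matrix.vecMulVec x x).PosSemidef := by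
    refine Matrix.PosSemidef.of_dotProduct_mulVec_nonneg ?_ fun y => ?_
    · ext i j
      by_cases h : i = j
      · subst h; simp
      · simp [Matrix.vecMulVec_apply, Matrix.diagonal_apply_ne _ h,
          Matrix.diagonal_apply_ne' _ h, mul_comm]
    · have hform : star y ⬝ᵥ ((Matrix.diagonal (fun i => |x i| ^ (2 - q))
            - Matrix.vecMulVec x x).mulVec y)
          = ∑ i, |x i| ^ (2 - q) * y i ^ 2 - (∑ i, x i * y i) ^ 2 := by
        rw [Matrix.sub_mulVec, dotProduct_sub, Matrix.vecMulVec_mulVec]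
        simp only [dotProduct, Matrix.mulVec_diagonal, Pi.star_apply, star_trivial,
          Pi.smul_apply, MulOpposite.smul_eq_mul_unop, MulOpposite.unop_op]
        congr 1
        · exact Finset.sum_congr rfl fun i _ => by ring
        · rw [sq, Finset.sum_mul]
          exact Finset.sum_congr rfl fun i _ => by ring
      -- Cauchy–Schwarz, splitting `(x i * y i) ^ 2` as `|x i| ^ q * (|x i| ^ (2 - q) * y i ^ 2)`.
      have hcs : (∑ i, x i * y i) ^ 2
          ≤ (∑ i, |x i| ^ q) * ∑ i, |x i| ^ (2 - q) * y i ^ 2 := by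
        refine Finset.sum_sq_le_sum_mul_sum_of_sq_le_mul _ (fun i _ => by positivity)
          (fun i _ => by positivity) fun i _ => le_of_eq ?_
        have h2 : |x i| ^ q * |x i| ^ (2 - q) = x i ^ 2 := by
          rw [← Real.rpow_add_of_nonneg (abs_nonneg _) hq0.le (by linarith),
            add_sub_cancel, Real.rpow_two, sq_abs]
        rw [← mul_assoc, h2, mul_pow]
      have hnn : 0 ≤ ∑ i, |x i| ^ (2 - q) * y i ^ 2 :=
        Finset.sum_nonneg fun i _ => by positivity
      rw [hform]
      linarith [mul_le_of_le_one_left hnn hx]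
  exact ⟨hmain, hmain.add (Matrix.PosSemidef.one.smul (sub_nonneg.2 hx))⟩
end

section
/- Let m ≥ q ≥ 1 and 0 < r ≤ q be integers, and let D_r := {X ∈ ℝ^{m×q} : rank(X) ≤ r}. For X ∈ ℝ^{m×q} define the linear map Q(X)[D] := ½(X Xᵀ D + D Xᵀ X). Then for every X with rank(X) ≤ r and every D ∈ ℝ^{m×q} with spectral norm ‖D‖ ≤ 1, there exists Y ∈ ℝ^{m×q} with rank(Y) ≤ rank(X) such that ‖(X + Q(X)[D]) − Y‖ ≤ (3/4)‖X‖³‖D‖²; in particular, dist(X + Q(X)[D], D_r) ≤ (3/4)‖X‖³‖D‖², where ‖·‖ is the spectral (operator) norm and dist is the corresponding distance to the set D_r. -/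
/-!
The witness is `Y = (1 + ½ D Xᵀ) X (1 + ½ Xᵀ D)`. Being a product with the factor `X`, it has rank
at most `rank X`, and expanding it gives `X + Q(X)[D] + ¼ D Xᵀ X Xᵀ D`. The error is therefore
`-¼ D Xᵀ X Xᵀ D`, of spectral norm at most `¼ ‖X‖³ ‖D‖²`, by submultiplicativity and `‖Xᵀ‖ = ‖X‖`.
-/

open Matrix
/-- The ℓ₂ (spectral) operator norm of a real matrix. -/
noncomputable def matrixOpNorm {m n : ℕ} (A : Matrix (Fin m) (Fin n) ℝ) : ℝ :=
  ‖LinearMap.toContinuousLinearMap (Matrix.toEuclideanLin A)‖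

lemma matrixOpNorm_nonneg {m n : ℕ} (A : Matrix (Fin m) (Fin n) ℝ) : 0 ≤ matrixOpNorm A :=
  norm_nonneg _

open scoped Matrix.Norms.L2Operator in
/-- `matrixOpNorm` is definitionally the norm of `Matrix.Norms.L2Operator`. -/
lemma matrixOpNorm_eq {m n : ℕ} (A : Matrix (Fin m) (Fin n) ℝ) : matrixOpNorm A = ‖A‖ :=
  rfl

open scoped Matrix.Norms.L2Operator in
lemma matrixOpNorm_mul_le {m n p : ℕ} (A : Matrix (Fin m) (Fin n) ℝ)
    (B : Matrix (Fin n) (Fin p) ℝ) :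
    matrixOpNorm (A * B) ≤ matrixOpNorm A * matrixOpNorm B := by
  simpa only [matrixOpNorm_eq] using Matrix.l2_opNorm_mul A B

open scoped Matrix.Norms.L2Operator in
lemma matrixOpNorm_transpose {m n : ℕ} (A : Matrix (Fin m) (Fin n) ℝ) :
    matrixOpNorm Aᵀ = matrixOpNorm A := by
  simpa only [matrixOpNorm_eq, Matrix.conjTranspose_eq_transpose_of_trivial] using
    Matrix.l2_opNorm_conjTranspose A

open scoped Matrix.Norms.L2Operator in
lemma matrixOpNorm_smul {m n : ℕ} (c : ℝ) (A : Matrix (Fin m) (Fin n) ℝ) :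
    matrixOpNorm (c • A) = |c| * matrixOpNorm A := by
  simp only [matrixOpNorm_eq, norm_smul, Real.norm_eq_abs]

lemma matrixOpNorm_quintic_le {m q : ℕ} (X D : Matrix (Fin m) (Fin q) ℝ) :
    matrixOpNorm (D * Xᵀ * X * (Xᵀ * D)) ≤ matrixOpNorm X ^ 3 * matrixOpNorm D ^ 2 := by
  have hx := matrixOpNorm_nonneg X
  have hd := matrixOpNorm_nonneg D
  have h1 := matrixOpNorm_mul_le D Xᵀ
  have h2 := matrixOpNorm_mul_le (D * Xᵀ) X
  have h3 := matrixOpNorm_mul_le Xᵀ D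
  have h4 := matrixOpNorm_mul_le (D * Xᵀ * X) (Xᵀ * D)
  rw [matrixOpNorm_transpose] at h1 h3
  calc matrixOpNorm (D * Xᵀ * X * (Xᵀ * D))
      ≤ matrixOpNorm (D * Xᵀ * X) * matrixOpNorm (Xᵀ * D) := h4
    _ ≤ (matrixOpNorm D * matrixOpNorm X * matrixOpNorm X) * (matrixOpNorm X * matrixOpNorm D) :=
        mul_le_mul (h2.trans (mul_le_mul_of_nonneg_right h1 hx)) h3
          (matrixOpNorm_nonneg _) (by positivity)
    _ = matrixOpNorm X ^ 3 * matrixOpNorm D ^ 2 := by ring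

/-- Quadratic distance-growth property of the projective mapping
`Q(X)[D] = ½(XXᵀD + DXᵀX)` for the low-rank variety `D_r = {X : rank X ≤ r}`:
for `rank X ≤ r` and spectral norm `‖D‖ ≤ 1` there is `Y` with `rank Y ≤ rank X` and
`‖(X + Q(X)[D]) - Y‖ ≤ (3/4)‖X‖³‖D‖²`; in particular the (spectral-norm) distance of
`X + Q(X)[D]` to `D_r` is at most `(3/4)‖X‖³‖D‖²`. -/
theorem stmt15 {m q : ℕ} (r : ℕ) (hq : 1 ≤ q) (hqm : q ≤ m) (hr0 : 0 < r) (hrq : r ≤ q)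
    (X D : Matrix (Fin m) (Fin q) ℝ) (hX : X.rank ≤ r) (hD : matrixOpNorm D ≤ 1) :
    (∃ Y : Matrix (Fin m) (Fin q) ℝ, Y.rank ≤ X.rank ∧
      matrixOpNorm ((X + (1 / 2 : ℝ) • (X * Xᵀ * D + D * Xᵀ * X)) - Y) ≤
        3 / 4 * matrixOpNorm X ^ 3 * matrixOpNorm D ^ 2) ∧
    sInf ((fun Y => matrixOpNorm ((X + (1 / 2 : ℝ) • (X * Xᵀ * D + D * Xᵀ * X)) - Y)) ''
        {Y : Matrix (Fin m) (Fin q) ℝ | Y.rank ≤ r}) ≤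
      3 / 4 * matrixOpNorm X ^ 3 * matrixOpNorm D ^ 2 := by
  have key : ∃ Y : Matrix (Fin m) (Fin q) ℝ, Y.rank ≤ X.rank ∧
      matrixOpNorm ((X + (1 / 2 : ℝ) • (X * Xᵀ * D + D * Xᵀ * X)) - Y) ≤
        3 / 4 * matrixOpNorm X ^ 3 * matrixOpNorm D ^ 2 := by
    refine ⟨(1 + (1 / 2 : ℝ) • (D * Xᵀ)) * X * (1 + (1 / 2 : ℝ) • (Xᵀ * D)),
      (Matrix.rank_mul_le_left _ _).trans (Matrix.rank_mul_le_right _ _), ?_⟩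
    have e : (X + (1 / 2 : ℝ) • (X * Xᵀ * D + D * Xᵀ * X)) -
        (1 + (1 / 2 : ℝ) • (D * Xᵀ)) * X * (1 + (1 / 2 : ℝ) • (Xᵀ * D)) =
        (-1 / 4 : ℝ) • (D * Xᵀ * X * (Xᵀ * D)) := by
      simp only [Matrix.add_mul, Matrix.mul_add, Matrix.one_mul, Matrix.mul_one,
        Matrix.smul_mul, Matrix.mul_smul, Matrix.mul_assoc]
      module
    have h := matrixOpNorm_quintic_le X D
    have h0 : 0 ≤ matrixOpNorm X ^ 3 * matrixOpNorm D ^ 2 :=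
      mul_nonneg (pow_nonneg (matrixOpNorm_nonneg X) 3) (pow_nonneg (matrixOpNorm_nonneg D) 2)
    have habs : |(-1 / 4 : ℝ)| = 1 / 4 := by norm_num [abs_div]
    rw [e, matrixOpNorm_smul, habs]
    linarith
  refine ⟨key, ?_⟩
  obtain ⟨Y, hY, hle⟩ := key
  refine le_trans (csInf_le ⟨0, ?_⟩ ⟨Y, hY.trans hX, rfl⟩) hle
  rintro _ ⟨Z, -, rfl⟩
  exact matrixOpNorm_nonneg _
end

section
/- Let U ⊆ ℝⁿ be open, and let φ : U → ℝ be three times continuously differentiable with ∇²φ(y) positive definite for every y ∈ U. Suppose g := ∇φ maps U bijectively onto an open set V ⊆ ℝⁿ with inverse ψ : V → U, and that ψ is twice continuously differentiable (so Dψ(g(y)) = (∇²φ(y))⁻¹ for y ∈ U). For y ∈ U and w ∈ ℝⁿ define T_φ(y; w) := ½ (∇²φ(y))⁻¹ (∇³φ(y)[(∇²φ(y))⁻¹ w]) (∇²φ(y))⁻¹. Let x ∈ U and d ∈ ℝⁿ be such that the segment [g(x), g(x)+d] is contained in V, and let L ≥ 0 satisfy ‖T_φ(ψ(u); w)‖ ≤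 L for every u on this segment and every w with ‖w‖ = 1. Then ‖ψ(g(x) + d) − (x + (∇²φ(x))⁻¹ d)‖ ≤ L‖d‖². -/
open scoped RealInnerProductSpace

/-!
For `u ∈ V` the chain rule applied to `g ∘ ψ = id` gives `Dψ(u) = (H (ψ u))⁻¹`. Differentiating the
inverse along the line `u(t) = g x + t d`, the operator `A(t) = (H (ψ (u t)))⁻¹` satisfies
`A'(t) = -A(t) (D3 (A(t) d)) A(t) = -2 T(ψ (u t); d)`, so `‖A'(t)‖ ≤ 2 L ‖d‖` by homogeneity of `T`
in its second argument. One integration gives `‖A(t) d - A(0) d‖ ≤ 2 L ‖d‖² t`, and a second one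
bounds `ψ (u t) - x - t A(0) d`, whose derivative is `A(t) d - A(0) d`, by `L ‖d‖² t²`. Both
integrations are mean value inequalities.
-/

/-- An operator on a finite-dimensional inner product space with positive quadratic form is
invertible. -/
lemma isUnit_of_inner_pos {E : Type*} [NormedAddCommGroup E] [InnerProductSpace ℝ E]
    [FiniteDimensional ℝ E] (A : E →L[ℝ] E) (hA : ∀ v : E, v ≠ 0 → 0 < ⟪v, A v⟫) : IsUnit A := by
  have : CompleteSpace E := FiniteDimensional.complete ℝ E
  have hinj : Function.Injective A := by
    refine (injective_iff_map_eq_zero A).2 fun v hv => ?_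
    by_contra h
    have := hA v h
    simp [hv] at this
  rw [ContinuousLinearMap.isUnit_iff_bijective]
  exact ⟨hinj, (LinearMap.injective_iff_surjective (f := (A : E →ₗ[ℝ] E))).1 hinj⟩

/-- Second-order Taylor estimate along `[0, 1]` for a curve with velocity `A t d`, where the
operator-valued function `A` has derivative bounded by `2 L ‖d‖`. -/
lemma norm_taylor_le_s16 {E : Type*} [NormedAddCommGroup E] [NormedSpace ℝ E]
    (γ : ℝ → E) (A A' : ℝ → E →L[ℝ] E) (d : E) (L : ℝ)
    (hγ : ∀ t ∈ Set.Icc (0 : ℝ) 1, HasDerivAt γ (A t d) t)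
    (hA : ∀ t ∈ Set.Icc (0 : ℝ) 1, HasDerivAt A (A' t) t)
    (hA' : ∀ t ∈ Set.Icc (0 : ℝ) 1, ‖A' t‖ ≤ 2 * L * ‖d‖) :
    ‖γ 1 - (γ 0 + A 0 d)‖ ≤ L * ‖d‖ ^ 2 := by
  have hvel : ∀ t ∈ Set.Icc (0 : ℝ) 1, ‖A t d - A 0 d‖ ≤ 2 * L * ‖d‖ ^ 2 * t := by
    intro t ht
    have h1 : ‖A t - A 0‖ ≤ 2 * L * ‖d‖ * (t - 0) :=
      norm_image_sub_le_of_norm_deriv_le_segment' (fun s hs => (hA s hs).hasDerivWithinAt)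
        (fun s hs => hA' s (Set.Ico_subset_Icc_self hs)) t ht
    calc ‖A t d - A 0 d‖ = ‖(A t - A 0) d‖ := by simp
      _ ≤ ‖A t - A 0‖ * ‖d‖ := (A t - A 0).le_opNorm d
      _ ≤ 2 * L * ‖d‖ * (t - 0) * ‖d‖ := by gcongr
      _ = 2 * L * ‖d‖ ^ 2 * t := by ring
  have hf : ∀ t ∈ Set.Icc (0 : ℝ) 1,
      HasDerivAt (fun t => γ t - (γ 0 + t • A 0 d)) (A t d - A 0 d) t := by
    intro t ht
    refine ((hγ t ht).fun_sub
      (((hasDerivAt_id t).smul_const (A 0 d)).const_add (γ 0))).congr_deriv ?_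
    simp
  have hB : ∀ t : ℝ, HasDerivAt (fun t : ℝ => L * ‖d‖ ^ 2 * t ^ 2) (2 * L * ‖d‖ ^ 2 * t) t := by
    intro t
    refine ((hasDerivAt_pow 2 t).const_mul (L * ‖d‖ ^ 2)).congr_deriv ?_
    norm_num
    ring
  have key := image_norm_le_of_norm_deriv_right_le_deriv_boundary
    (fun t ht => (hf t ht).continuousAt.continuousWithinAt)
    (fun t ht => (hf t (Set.Ico_subset_Icc_self ht)).hasDerivWithinAt)
    (by simp) hB (fun t ht => hvel t (Set.Ico_subset_Icc_self ht))
    (Set.right_mem_Icc.2 zero_le_one)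
  simpa using key

/-- (Paper's Lemma 4.1.) Second-order Taylor bound for the inverse
gradient map of a Bregman kernel: with `g = ∇φ`, `H y = ∇²φ(y)`, `D3 y = ∇³φ(y)`
(as the derivative of `H`), `ψ = g⁻¹`, and
`T(y; w) = ½ (H y)⁻¹ (∇³φ(y)[(H y)⁻¹ w]) (H y)⁻¹`, if `‖T(ψ(u); w)‖ ≤ L` on the
segment `[g x, g x + d] ⊆ V` for unit `w`, then
`‖ψ(g x + d) - (x + (H x)⁻¹ d)‖ ≤ L ‖d‖²`. -/
theorem stmt16 {n : ℕ}
    (U V : Set (EuclideanSpace ℝ (Fin n))) (hU : IsOpen U) (hV : IsOpen V)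
    (φ : EuclideanSpace ℝ (Fin n) → ℝ)
    (g ψ : EuclideanSpace ℝ (Fin n) → EuclideanSpace ℝ (Fin n))
    (H : EuclideanSpace ℝ (Fin n) → (EuclideanSpace ℝ (Fin n) →L[ℝ] EuclideanSpace ℝ (Fin n)))
    (D3 : EuclideanSpace ℝ (Fin n) →
      (EuclideanSpace ℝ (Fin n) →L[ℝ] (EuclideanSpace ℝ (Fin n) →L[ℝ] EuclideanSpace ℝ (Fin n))))
    (hg : ∀ y ∈ U, HasGradientAt φ (g y) y)
    (hH : ∀ y ∈ U, HasFDerivAt g (H y) y)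
    (hD3 : ∀ y ∈ U, HasFDerivAt H (D3 y) y)
    (hD3c : ContinuousOn D3 U)
    (hHsa : ∀ y ∈ U, IsSelfAdjoint (H y))
    (hHpd : ∀ y ∈ U, ∀ v : EuclideanSpace ℝ (Fin n), v ≠ 0 → 0 < ⟪v, H y v⟫)
    (hgV : Set.MapsTo g U V) (hψU : Set.MapsTo ψ V U)
    (hinv₁ : ∀ y ∈ U, ψ (g y) = y) (hinv₂ : ∀ v ∈ V, g (ψ v) = v)
    (hψ : ContDiffOn ℝ 2 ψ V)
    (T : EuclideanSpace ℝ (Fin n) → EuclideanSpace ℝ (Fin n) →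
      (EuclideanSpace ℝ (Fin n) →L[ℝ] EuclideanSpace ℝ (Fin n)))
    (hT : ∀ y w, T y w = (2 : ℝ)⁻¹ •
      ((Ring.inverse (H y)).comp (((D3 y) ((Ring.inverse (H y)) w)).comp (Ring.inverse (H y)))))
    (x : EuclideanSpace ℝ (Fin n)) (hx : x ∈ U) (d : EuclideanSpace ℝ (Fin n))
    (hseg : segment ℝ (g x) (g x + d) ⊆ V)
    (L : ℝ) (hL : 0 ≤ L)
    (hTL : ∀ u ∈ segment ℝ (g x) (g x + d), ∀ w : EuclideanSpace ℝ (Fin n), ‖w‖ = 1 →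
      ‖T (ψ u) w‖ ≤ L) :
    ‖ψ (g x + d) - (x + (Ring.inverse (H x)) d)‖ ≤ L * ‖d‖ ^ 2 := by
  have hunit : ∀ y ∈ U, IsUnit (H y) := fun y hy => isUnit_of_inner_pos (H y) (hHpd y hy)
  have hψ' : ∀ u ∈ V, HasFDerivAt ψ (Ring.inverse (H (ψ u))) u := by
    intro u hu
    have hd : HasFDerivAt ψ (fderiv ℝ ψ u) u :=
      ((hψ.contDiffAt (hV.mem_nhds hu)).differentiableAt (by norm_num)).hasFDerivAt
    have hcomp : HasFDerivAt (g ∘ ψ) ((H (ψ u)).comp (fderiv ℝ ψ u)) u :=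
      (hH _ (hψU hu)).comp u hd
    have hid : HasFDerivAt (g ∘ ψ) (ContinuousLinearMap.id ℝ (EuclideanSpace ℝ (Fin n))) u :=
      (hasFDerivAt_id u).congr_of_eventuallyEq
        (Filter.eventually_of_mem (hV.mem_nhds hu) fun v hv => hinv₂ v hv)
    have hmul : H (ψ u) * fderiv ℝ ψ u = 1 := hcomp.unique hid
    have hP : fderiv ℝ ψ u = Ring.inverse (H (ψ u)) := by
      calc fderiv ℝ ψ u = Ring.inverse (H (ψ u)) * (H (ψ u) * fderiv ℝ ψ u) := by
            rw [← mul_assoc, Ring.inverse_mul_cancel _ (hunit _ (hψU hu)), one_mul]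
        _ = Ring.inverse (H (ψ u)) := by rw [hmul, mul_one]
    rwa [hP] at hd
  have hmem : ∀ t ∈ Set.Icc (0 : ℝ) 1, g x + t • d ∈ segment ℝ (g x) (g x + d) := by
    intro t ht
    rw [segment_eq_image']
    exact ⟨t, ht, by simp⟩
  have hline : ∀ t : ℝ, HasDerivAt (fun t : ℝ => g x + t • d) d t := by
    intro t
    simpa using ((hasDerivAt_id t).smul_const d).const_add (g x)
  have hγ : ∀ t ∈ Set.Icc (0 : ℝ) 1, HasDerivAt (fun t : ℝ => ψ (g x + t • d))
      (Ring.inverse (H (ψ (g x + t • d))) d) t := fun t ht =>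
    (hψ' _ (hseg (hmem t ht))).comp_hasDerivAt t (hline t)
  have hA : ∀ t ∈ Set.Icc (0 : ℝ) 1,
      HasDerivAt (fun t : ℝ => Ring.inverse (H (ψ (g x + t • d))))
        (-((2 : ℝ) • T (ψ (g x + t • d)) d)) t := by
    intro t ht
    have hy := hψU (hseg (hmem t ht))
    have hHt := (hD3 _ hy).comp_hasDerivAt t (hγ t ht)
    obtain ⟨a, ha⟩ := hunit _ hy
    have hinv := hasFDerivAt_ringInverse (𝕜 := ℝ) a
    rw [ha] at hinv
    have h := hinv.comp_hasDerivAt t hHt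
    have hai : Ring.inverse (H (ψ (g x + t • d))) = ↑a⁻¹ := by rw [← ha, Ring.inverse_unit]
    refine h.congr_deriv ?_
    rw [hT, smul_smul, hai]
    norm_num
    rfl
  -- `T y` is linear in its second argument, so the bound on unit vectors scales.
  have hTd : ∀ u ∈ segment ℝ (g x) (g x + d), ‖T (ψ u) d‖ ≤ L * ‖d‖ := by
    intro u hu
    have hsm : ∀ (c : ℝ) w, T (ψ u) (c • w) = c • T (ψ u) w := by
      intro c w
      ext1 v
      simp [hT, smul_comm c]
    rcases eq_or_ne d 0 with hd | hd
    · have h0 : T (ψ u) d = 0 := by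
        ext1 v
        have h := DFunLike.congr_fun (hsm 0 d) v
        simpa [hd] using h
      rw [h0, norm_zero]
      positivity
    · have hs : T (ψ u) d = ‖d‖ • T (ψ u) (‖d‖⁻¹ • d) := by
        rw [← hsm, smul_smul, mul_inv_cancel₀ (norm_ne_zero_iff.2 hd), one_smul]
      rw [hs, norm_smul, norm_norm, mul_comm]
      gcongr
      exact hTL u hu _ (norm_smul_inv_norm (𝕜 := ℝ) hd)
  have hA' : ∀ t ∈ Set.Icc (0 : ℝ) 1,
      ‖-((2 : ℝ) • T (ψ (g x + t • d)) d)‖ ≤ 2 * L * ‖d‖ := by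
    intro t ht
    rw [norm_neg, norm_smul, Real.norm_ofNat, mul_assoc]
    gcongr
    exact hTd _ (hmem t ht)
  have key := norm_taylor_le_s16 (fun t : ℝ => ψ (g x + t • d)) _ _ d L hγ hA hA'
  simpa [hinv₁ x hx] using key
end
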